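/- arXiv:1505.02315 — 5 statements merged into one kernel-verified Lean document; each statement's English description precedes it below -/
import Mathlib

section
/- Let K be an arbitrary field, U and V finite-dimensional K-vector spaces, and 𝒮 an affine subspace of L(U,V) with codim 𝒮 ≤ dim V − 2. Then every range-compatible affine map F : 𝒮 → V is local. -/
attribute [local instance] AffineSubspace.toAddTorsor

/-!
Let `D` be the direction of `𝒮` and call a linear form `φ` on `V` degenerate if `φ (s z) = 0` for
all `s ∈ D` and some `z ≠ 0`. If `φ` is nondegenerate, then `s ↦ φ ∘ s` maps `D` onto the dual of
`U`, so `φ ∘ s₀ = 0` for some `s₀ ∈ 𝒮`. Range-compatibility then forces `φ (F s)` to depend only on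
`φ ∘ s`, and by reflexivity of `U` there is `x` with `φ (F s) = φ (s x)` on `𝒮`.

The functionals `s ↦ ψᵢ (s zᵢ)` are linearly independent whenever the `ψᵢ` are and the `zᵢ` are
nonzero, so the degenerate forms span a space of dimension at most `codim D`. Applied to the
operators in `D` with range in `ker φ`, this bounds the forms `ψ` for which a relation
`φ (s y) + ψ (s z) = 0` on `D` with `z ≠ 0` exists: together with `φ` they lie in a proper subspace
`H` of the dual of `V`. For `ψ ∉ H`, comparing the vectors attached to `φ`, `ψ` and `φ + ψ` gives
such a relation, so the three vectors agree. Hence `ψ (F s) = ψ (s x)` for all `ψ ∉ H`, and the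
complement of a proper subspace spans.
-/

namespace RangeCompatible

open Module

section Preliminaries

theorem linearMap_ext_of_forall_notMem {R M N : Type*} [Ring R] [AddCommGroup M] [Module R M]
    [AddCommGroup N] [Module R N] {p : Submodule R M} (hp : p ≠ ⊤) {f g : M →ₗ[R] N}
    (h : ∀ m ∉ p, f m = g m) : f = g := by
  obtain ⟨a, -, ha⟩ := SetLike.exists_of_lt hp.lt_top
  ext m
  by_cases hm : m ∈ p
  · have hadd : m + a ∉ p := fun hc => ha ((p.add_mem_iff_right hm).1 hc)
    simpa only [map_add, h a ha, add_left_inj] using h (m + a) hadd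
  · exact h m hm

variable {K M N : Type*} [Field K] [AddCommGroup M] [Module K M] [AddCommGroup N] [Module K N]

theorem finrank_add_finrank_le_finrank_comap_add_finrank [FiniteDimensional K M]
    [FiniteDimensional K N] (f : M →ₗ[K] N) (p : Submodule K N) :
    finrank K M + finrank K p ≤ finrank K (p.comap f) + finrank K N := by
  have hker : LinearMap.ker (p.mkQ ∘ₗ f) = p.comap f := by rw [LinearMap.ker_comp, p.ker_mkQ]
  have hrank := (p.mkQ ∘ₗ f).finrank_range_add_finrank_ker
  have hrange := (LinearMap.range (p.mkQ ∘ₗ f)).finrank_le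
  have hquot := p.finrank_quotient_add_finrank
  rw [hker] at hrank
  lia

theorem finrank_le_finrank_ker_add_one [FiniteDimensional K M] (φ : Dual K M) :
    finrank K M ≤ finrank K (LinearMap.ker φ) + 1 := by
  have hrank := φ.finrank_range_add_finrank_ker
  have hrange := (LinearMap.range φ).finrank_le
  rw [finrank_self] at hrange
  lia

theorem exists_flip_eq_of_ker_le_ker [FiniteDimensional K N] (B : M →ₗ[K] Dual K N)
    {g : Dual K M} (hg : LinearMap.ker B ≤ LinearMap.ker g) : ∃ x, B.flip x = g := by
  have hmem : g ∈ LinearMap.range B.dualMap := by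
    rw [LinearMap.range_dualMap_eq_dualAnnihilator_ker, Submodule.mem_dualAnnihilator]
    exact hg
  obtain ⟨ξ, rfl⟩ := hmem
  obtain ⟨x, rfl⟩ := (evalEquiv K N).surjective ξ
  exact ⟨x, rfl⟩

end Preliminaries

variable {K U V : Type*} [Field K] [AddCommGroup U] [Module K U] [AddCommGroup V] [Module K V]

theorem linearIndependent_dual_comp_apply {ι : Type*} {ψ : ι → Dual K V}
    (hψ : LinearIndependent K ψ) {z : ι → U} (hz : ∀ i, z i ≠ 0) :
    LinearIndependent K (fun i => ψ i ∘ₗ LinearMap.applyₗ (z i) : ι → Dual K (U →ₗ[K] V)) := by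
  rw [linearIndependent_iff'] at hψ ⊢
  intro t a hsum i hi
  obtain ⟨f, hf⟩ := Projective.exists_dual_eq_one K (hz i)
  have hrel : ∑ j ∈ t, (a j * f (z j)) • ψ j = 0 := by
    ext v
    simpa [mul_assoc] using LinearMap.congr_fun hsum (f.smulRight v)
  simpa [hf] using hψ t _ hrel i hi

/-- The forms `φ` on `V` for which the pairing `(s, z) ↦ φ (s z)` of `D` with `U` is degenerate
on the side of `U`. -/
def degenerateForms (D : Submodule K (U →ₗ[K] V)) : Set (Dual K V) :=
  {φ | ∃ z ≠ 0, ∀ s ∈ D, φ (s z) = 0}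

theorem eq_zero_of_notMem_degenerateForms {D : Submodule K (U →ₗ[K] V)} {φ : Dual K V}
    (hφ : φ ∉ degenerateForms D) {z : U} (hz : ∀ s ∈ D, φ (s z) = 0) : z = 0 := by
  by_contra hne
  exact hφ ⟨z, hne, hz⟩

/-- The forms whose restriction to `ker φ` is in the span of the degenerate forms of
`{s ∈ D | range s ≤ ker φ}`, viewed as a space of maps into `ker φ`. Outside this subspace, `ψ`
satisfies no relation `φ (s y) + ψ (s z) = 0` on `D` with `z ≠ 0`. -/
def exceptionalForms (D : Submodule K (U →ₗ[K] V)) (φ : Dual K V) : Submodule K (Dual K V) :=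
  (Submodule.span K (degenerateForms (D.comap ((LinearMap.ker φ).subtype.compRight K)))).comap
    (LinearMap.ker φ).dualRestrict

section Exceptional

variable {D : Submodule K (U →ₗ[K] V)} {φ ψ : Dual K V}

theorem self_mem_exceptionalForms (D : Submodule K (U →ₗ[K] V)) (φ : Dual K V) :
    φ ∈ exceptionalForms D φ := by
  have hrestrict : (LinearMap.ker φ).dualRestrict φ = 0 := LinearMap.ext fun v => v.2
  rw [exceptionalForms, Submodule.mem_comap, hrestrict]
  exact zero_mem _

theorem eq_zero_of_notMem_exceptionalForms (hψ : ψ ∉ exceptionalForms D φ) {y z : U}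
    (hrel : ∀ s ∈ D, φ (s y) + ψ (s z) = 0) : z = 0 := by
  by_contra hz
  refine hψ (Submodule.subset_span ⟨z, hz, fun s hs => ?_⟩)
  have hsy : φ (s y) = 0 := (s y).2
  simpa [hsy] using hrel _ hs

theorem notMem_degenerateForms_of_notMem_exceptionalForms (hψ : ψ ∉ exceptionalForms D φ) :
    ψ ∉ degenerateForms D := by
  rintro ⟨z, hz, hψz⟩
  exact hz (eq_zero_of_notMem_exceptionalForms (y := 0) hψ fun s hs => by simp [hψz s hs])

end Exceptional

section Dimension

variable [FiniteDimensional K U] [FiniteDimensional K V] {D : Submodule K (U →ₗ[K] V)}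

theorem finrank_span_degenerateForms_add_finrank_le (D : Submodule K (U →ₗ[K] V)) :
    finrank K (Submodule.span K (degenerateForms D)) + finrank K D ≤ finrank K (U →ₗ[K] V) := by
  obtain ⟨b, hbD, hspan, hli⟩ := exists_linearIndependent K (degenerateForms D)
  have : Fintype b := hli.setFinite.fintype
  choose z hz hbz using fun i : b => hbD i.2
  let annihilators : b → D.dualAnnihilator := fun i =>
    ⟨i.1 ∘ₗ LinearMap.applyₗ (z i), (Submodule.mem_dualAnnihilator _).2 (hbz i)⟩
  have hli' : LinearIndependent K annihilators :=
    .of_comp D.dualAnnihilator.subtype (linearIndependent_dual_comp_apply hli hz)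
  have hcard : finrank K (Submodule.span K b) = Fintype.card b := by
    rw [← finrank_span_eq_card hli, Subtype.range_coe]
  have hle := hli'.fintype_card_le_finrank
  have hdim := Subspace.finrank_add_finrank_dualAnnihilator_eq D
  rw [← hspan]
  lia

theorem span_degenerateForms_ne_top
    (hD : finrank K (U →ₗ[K] V) < finrank K D + finrank K V) :
    Submodule.span K (degenerateForms D) ≠ ⊤ := by
  intro htop
  have hle := finrank_span_degenerateForms_add_finrank_le D
  rw [htop, finrank_top, Subspace.dual_finrank_eq] at hle
  lia

theorem exists_notMem_degenerateForms
    (hD : finrank K (U →ₗ[K] V) < finrank K D + finrank K V) : ∃ φ, φ ∉ degenerateForms D := by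
  obtain ⟨φ, -, hφ⟩ := SetLike.exists_of_lt (span_degenerateForms_ne_top hD).lt_top
  exact ⟨φ, fun hc => hφ (Submodule.subset_span hc)⟩

theorem exceptionalForms_ne_top
    (hD : finrank K (U →ₗ[K] V) + 2 ≤ finrank K D + finrank K V) (φ : Dual K V) :
    exceptionalForms D φ ≠ ⊤ := by
  have hcomap := finrank_add_finrank_le_finrank_comap_add_finrank
    ((LinearMap.ker φ).subtype.compRight K (M := U)) D
  have hker := finrank_le_finrank_ker_add_one φ
  rw [exceptionalForms, Ne, ← Submodule.comap_top (LinearMap.ker φ).dualRestrict,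
    (Submodule.comap_injective_of_surjective Subspace.dualRestrict_surjective).eq_iff]
  exact span_degenerateForms_ne_top (by lia)

end Dimension

/-- The pairing `(s, u) ↦ φ (s u)`, as the map sending `s ∈ D` to the form `φ ∘ s`. -/
def formPairing (D : Submodule K (U →ₗ[K] V)) (φ : Dual K V) : D →ₗ[K] Dual K U :=
  φ.compRight K ∘ₗ D.subtype

section Local

variable [FiniteDimensional K U] {𝒮 : AffineSubspace K (U →ₗ[K] V)} {φ ψ : Dual K V}

theorem formPairing_surjective {D : Submodule K (U →ₗ[K] V)} (hφ : φ ∉ degenerateForms D) :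
    Function.Surjective (formPairing D φ) := by
  rw [← LinearMap.flip_injective_iff₂, injective_iff_map_eq_zero]
  exact fun z hz =>
    eq_zero_of_notMem_degenerateForms hφ fun s hs => LinearMap.congr_fun hz ⟨s, hs⟩

variable [Nonempty 𝒮]

theorem exists_dual_comp_eq_zero (hφ : φ ∉ degenerateForms 𝒮.direction) :
    ∃ s : 𝒮, φ ∘ₗ (s : U →ₗ[K] V) = 0 := by
  obtain ⟨s⟩ := ‹Nonempty 𝒮›
  obtain ⟨d, hd⟩ := formPairing_surjective hφ (φ ∘ₗ (s : U →ₗ[K] V))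
  refine ⟨-d +ᵥ s, ?_⟩
  rw [AffineSubspace.coe_vadd, vadd_eq_add, LinearMap.comp_add, ← hd, Submodule.coe_neg,
    LinearMap.comp_neg]
  exact neg_add_cancel _

variable {F : 𝒮 →ᵃ[K] V}

theorem exists_dual_apply_eq_of_notMem_degenerateForms
    (hF : ∀ s : 𝒮, F s ∈ LinearMap.range (s : U →ₗ[K] V))
    (hφ : φ ∉ degenerateForms 𝒮.direction) :
    ∃ x, ∀ s : 𝒮, φ (F s) = φ ((s : U →ₗ[K] V) x) := by
  obtain ⟨s₀, hs₀⟩ := exists_dual_comp_eq_zero hφ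
  have hvanish (s : 𝒮) (hs : φ ∘ₗ (s : U →ₗ[K] V) = 0) : φ (F s) = 0 := by
    obtain ⟨u, hu⟩ := hF s
    rw [← hu]
    exact LinearMap.congr_fun hs u
  have hlinear (d : 𝒮.direction) : φ (F (d +ᵥ s₀)) = φ (F.linear d) := by
    rw [F.map_vadd, vadd_eq_add, map_add, hvanish s₀ hs₀, add_zero]
  have hcomp (d : 𝒮.direction) :
      φ ∘ₗ ((d +ᵥ s₀ : 𝒮) : U →ₗ[K] V) = formPairing 𝒮.direction φ d := by
    rw [AffineSubspace.coe_vadd, vadd_eq_add, LinearMap.comp_add, hs₀, add_zero]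
    rfl
  have hker : LinearMap.ker (formPairing 𝒮.direction φ) ≤ LinearMap.ker (φ ∘ₗ F.linear) :=
    fun d hd => (hlinear d).symm.trans (hvanish _ ((hcomp d).trans hd))
  obtain ⟨x, hx⟩ := exists_flip_eq_of_ker_le_ker _ hker
  refine ⟨x, fun s => ?_⟩
  rw [← vsub_vadd s s₀, hlinear]
  exact (LinearMap.congr_fun hx _).symm.trans (LinearMap.congr_fun (hcomp _) x).symm

theorem dual_apply_eq_of_notMem_exceptionalForms
    (hF : ∀ s : 𝒮, F s ∈ LinearMap.range (s : U →ₗ[K] V))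
    (hφ : φ ∉ degenerateForms 𝒮.direction) {x : U}
    (hx : ∀ s : 𝒮, φ (F s) = φ ((s : U →ₗ[K] V) x))
    (hψ : ψ ∉ exceptionalForms 𝒮.direction φ) (s : 𝒮) :
    ψ (F s) = ψ ((s : U →ₗ[K] V) x) := by
  have hadd : φ + ψ ∉ exceptionalForms 𝒮.direction φ := fun hc =>
    hψ ((Submodule.add_mem_iff_right _ (self_mem_exceptionalForms _ φ)).1 hc)
  obtain ⟨y, hy⟩ := exists_dual_apply_eq_of_notMem_degenerateForms hF
    (notMem_degenerateForms_of_notMem_exceptionalForms hψ)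
  obtain ⟨w, hw⟩ := exists_dual_apply_eq_of_notMem_degenerateForms hF
    (notMem_degenerateForms_of_notMem_exceptionalForms hadd)
  have hrel (s : 𝒮) :
      φ ((s : U →ₗ[K] V) (w - x)) + ψ ((s : U →ₗ[K] V) (w - y)) = 0 := by
    have hsum := hw s
    simp only [LinearMap.add_apply, map_sub] at hsum ⊢
    linear_combination hx s + hy s - hsum
  have hrel' : ∀ d ∈ 𝒮.direction, φ (d (w - x)) + ψ (d (w - y)) = 0 := by
    intro d hd
    obtain ⟨s, hs, t, ht, rfl⟩ :=
      (AffineSubspace.mem_direction_iff_eq_vsub Set.Nonempty.of_subtype d).1 hd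
    have hs' := hrel ⟨s, hs⟩
    have ht' := hrel ⟨t, ht⟩
    simp only [vsub_eq_sub, LinearMap.sub_apply, map_sub] at hs' ht' ⊢
    linear_combination hs' - ht'
  have hwy : w - y = 0 := eq_zero_of_notMem_exceptionalForms hψ hrel'
  have hwx : w - x = 0 :=
    eq_zero_of_notMem_degenerateForms hφ fun d hd => by simpa [hwy] using hrel' d hd
  rw [hy s, ← sub_eq_zero.1 hwy, sub_eq_zero.1 hwx]

end Local

end RangeCompatible

open RangeCompatible in
/-- Let `K` be an arbitrary field, `U` and `V` finite-dimensional `K`-vector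
spaces, and `𝒮` an affine subspace of `L(U,V)` with `codim 𝒮 ≤ dim V − 2`
(expressed as `dim L(U,V) + 2 ≤ dim 𝒮 + dim V`). Then every range-compatible affine map
`F : 𝒮 → V` is local. -/
theorem range_compatible_affine_map_is_local_of_codim_le_dimV_sub_two
    (K U V : Type*) [Field K]
    [AddCommGroup U] [Module K U] [FiniteDimensional K U]
    [AddCommGroup V] [Module K V] [FiniteDimensional K V]
    (𝒮 : AffineSubspace K (U →ₗ[K] V)) [Nonempty ↥𝒮]
    (hcodim : Module.finrank K (U →ₗ[K] V) + 2 ≤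
      Module.finrank K 𝒮.direction + Module.finrank K V)
    (F : ↥𝒮 →ᵃ[K] V)
    (hrc : ∀ s : ↥𝒮, F s ∈ LinearMap.range (s : U →ₗ[K] V)) :
    ∃ x : U, ∀ s : ↥𝒮, F s = (s : U →ₗ[K] V) x := by
  obtain ⟨φ, hφ⟩ := exists_notMem_degenerateForms (D := 𝒮.direction) (by lia)
  obtain ⟨x, hx⟩ := exists_dual_apply_eq_of_notMem_degenerateForms hrc hφ
  refine ⟨x, fun s => Module.eval_apply_injective K ?_⟩
  exact linearMap_ext_of_forall_notMem (exceptionalForms_ne_top hcodim φ) fun ψ hψ =>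
    dual_apply_eq_of_notMem_exceptionalForms hrc hφ hx hψ s
end

section
/- Let K be a field with more than 2 elements, U and V finite-dimensional K-vector spaces, and 𝒮 an affine subspace of L(U,V) with codim 𝒮 ≤ dim V − 1. Then every range-compatible affine map F : 𝒮 → V is local. -/
attribute [local instance] AffineSubspace.toAddTorsor

/-!
For `φ` in the dual of `V`, try to write `φ ∘ F` as `s ↦ φ (s x)` for some `x : U`. This is possible
as soon as `φ ∘ s = 0` for some `s ∈ 𝒮`; in particular it is possible, with a unique `x`, when `φ`
is good, i.e. when `t ↦ φ ∘ t` maps the direction of `𝒮` onto the dual of `U`. A dimension count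
provides `y ≠ 0` in `V` such that every `φ` with `φ y ≠ 0` is good.

Fix `φ` with `φ y = 1`, let `x` be its vector, and let `E` be the space of functionals that `x`
represents. Suppose `E` is proper and let `ψ ∉ E`. If `q` and `r` are the vectors of `ψ` and
`φ + t • ψ`, then `φ (s (x - r)) + t * ψ (s (q - r)) = 0` on `𝒮`, with `q ≠ r`. On the maps
`s ∈ span 𝒮` with range in `ker φ` this becomes `ψ (s (q - r)) = 0`, and since such `ψ` span the
dual of `ker φ`, the codimension of `span 𝒮` is at least `dim V - 1`. This is absurd if `0 ∉ 𝒮`.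
If `0 ∈ 𝒮`, the count is tight, so the relations attached to `ψ` and two different values of `t` are
proportional. This makes `x - r` a multiple `k • (q - r)`, so `k • φ + ψ` is not good; choosing
`ψ y = 0` forces `k = 0`, i.e. `x = r`, and then `ψ ∈ E` after all.
-/

open Module Submodule

theorem exists_ne_ne_of_two_lt_mk {α : Type*} (hα : 2 < Cardinal.mk α) (a b : α) :
    ∃ c, c ≠ a ∧ c ≠ b := by
  have three_le : ((2 : ℕ) : Cardinal) + 1 ≤ Cardinal.mk α :=
    Cardinal.natCast_add_one_le_iff.2 (by exact_mod_cast hα)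
  exact Cardinal.exists_ne_ne_of_three_le (by norm_num at three_le; exact three_le) a b

theorem span_compl_eq_top_of_ne_top {R M : Type*} [Ring R] [AddCommGroup M] [Module R M]
    {E : Submodule R M} (hE : E ≠ ⊤) : span R (E : Set M)ᶜ = ⊤ := by
  obtain ⟨w, hw⟩ : ∃ w, w ∉ E := by
    contrapose! hE
    exact eq_top_iff'.2 hE
  refine eq_top_iff'.2 fun v ↦ ?_
  by_cases hv : v ∈ E
  · have hvw : v + w ∉ E := fun h ↦ hw ((Submodule.add_mem_iff_right E hv).1 h)
    simpa using sub_mem (subset_span (s := (E : Set M)ᶜ) hvw) (subset_span (R := R) hw)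
  · exact subset_span hv

section NullVectors

variable {K U V : Type*} [Field K] [AddCommGroup U] [Module K U] [AddCommGroup V] [Module K V]

/-- The vectors `u` with `φ (s u) = 0` for all `s ∈ A`. Identifying the dual of `U →ₗ[K] V` with
`V* ⊗ U`, these are the `u` for which `φ ⊗ u` annihilates `A`. -/
def nullVectors (A : Submodule K (U →ₗ[K] V)) (φ : Dual K V) : Submodule K U :=
  (A.map (LinearMap.compRight K φ)).dualCoannihilator

theorem mem_nullVectors {A : Submodule K (U →ₗ[K] V)} {φ : Dual K V} {u : U} :
    u ∈ nullVectors A φ ↔ ∀ s ∈ A, φ (s u) = 0 := by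
  simp [nullVectors, mem_dualCoannihilator]

theorem nullVectors_anti {A B : Submodule K (U →ₗ[K] V)} (hAB : A ≤ B) (φ : Dual K V) :
    nullVectors B φ ≤ nullVectors A φ :=
  dualCoannihilator_anti (map_mono hAB)

theorem map_compRight_eq_top_of_nullVectors_eq_bot [FiniteDimensional K U]
    {A : Submodule K (U →ₗ[K] V)} {φ : Dual K V} (hφ : nullVectors A φ = ⊥) :
    A.map (LinearMap.compRight K φ) = ⊤ := by
  rw [← Subspace.dualCoannihilator_dualAnnihilator_eq (W := A.map _)]
  exact (congrArg dualAnnihilator hφ).trans dualAnnihilator_bot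

variable [FiniteDimensional K U] [FiniteDimensional K V]

-- `s ↦ (b i ∘ s)ᵢ` embeds `A` into the product of the annihilators of the `nullVectors A (b i)`.
theorem sum_finrank_nullVectors_add_finrank_le {ι : Type*} [Fintype ι]
    (A : Submodule K (U →ₗ[K] V)) (b : Basis ι K (Dual K V)) :
    ∑ i, finrank K (nullVectors A (b i)) + finrank K A ≤ finrank K (U →ₗ[K] V) := by
  let Φ : A →ₗ[K] Π i, (nullVectors A (b i)).dualAnnihilator :=
    LinearMap.pi fun i ↦ (LinearMap.compRight K (b i) ∘ₗ A.subtype).codRestrict _ fun s ↦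
      (mem_dualAnnihilator _).2 fun _ hu ↦ mem_nullVectors.1 hu s s.2
  have Φ_injective : Function.Injective Φ := by
    refine (injective_iff_map_eq_zero Φ).2 fun s hs ↦ Subtype.ext (LinearMap.ext fun u ↦ ?_)
    have b_apply (i : ι) : b i (s.1 u) = 0 :=
      LinearMap.congr_fun (congrArg Subtype.val (congrFun hs i)) u
    have eval_eq_zero : Dual.eval K V (s.1 u) = 0 := b.ext b_apply
    exact (eval_apply_eq_zero_iff K _).1 eval_eq_zero
  have (i : ι) : Free K (nullVectors A (b i)).dualAnnihilator :=
    Free.of_equiv (dualQuotEquivDualAnnihilator _)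
  calc ∑ i, finrank K (nullVectors A (b i)) + finrank K A
    _ ≤ ∑ i, finrank K (nullVectors A (b i)) +
          ∑ i, finrank K (nullVectors A (b i)).dualAnnihilator := by
        refine Nat.add_le_add_left ?_ _
        exact (LinearMap.finrank_le_finrank_of_injective Φ_injective).trans_eq
          (finrank_pi_fintype K)
    _ = finrank K (U →ₗ[K] V) := by
        simp only [← Finset.sum_add_distrib, Subspace.finrank_add_finrank_dualAnnihilator_eq,
          Finset.sum_const, Finset.card_univ, smul_eq_mul, ← finrank_eq_card_basis b,
          Subspace.dual_finrank_eq, finrank_linearMap, mul_comm]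

theorem finrank_nullVectors_add_le_of_span_eq_top {A : Submodule K (U →ₗ[K] V)}
    (hspan : span K {ψ | nullVectors A ψ ≠ ⊥} = ⊤) {φ : Dual K V} (hφ : φ ≠ 0) :
    finrank K (nullVectors A φ) + finrank K V + finrank K A ≤ finrank K (U →ₗ[K] V) + 1 := by
  classical
  have φ_indep : LinearIndepOn K id {φ} := (linearIndepOn_singleton_iff K).2 hφ
  have φ_subset : {φ} ⊆ insert φ {ψ | nullVectors A ψ ≠ ⊥} := by simp
  have insert_span : ⊤ ≤ span K (insert φ {ψ | nullVectors A ψ ≠ ⊥}) :=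
    hspan.ge.trans (span_mono (Set.subset_insert _ _))
  let b := Basis.extendLe φ_indep φ_subset insert_span
  have := Module.Finite.finite_basis b
  let _ := Fintype.ofFinite (φ_indep.extend φ_subset)
  obtain ⟨i₀, hi₀⟩ : φ ∈ Set.range b := Basis.subset_extendLe _ _ _ rfl
  have one_le (i) (hi : i ≠ i₀) : 1 ≤ finrank K (nullVectors A (b i)) := by
    rw [one_le_finrank_iff]
    refine (Basis.extendLe_subset φ_indep φ_subset insert_span ⟨i, rfl⟩).resolve_left ?_
    exact fun h ↦ hi (b.injective (h.trans hi₀.symm))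
  have card_erase : (Finset.univ.erase i₀).card + 1 = finrank K V := by
    rw [Finset.card_erase_add_one (Finset.mem_univ _), Finset.card_univ,
      ← finrank_eq_card_basis b, Subspace.dual_finrank_eq]
  have card_le_sum := Finset.card_nsmul_le_sum (Finset.univ.erase i₀) _ 1
    fun i hi ↦ one_le i (Finset.ne_of_mem_erase hi)
  have sum_le := sum_finrank_nullVectors_add_finrank_le A b
  rw [← Finset.add_sum_erase _ _ (Finset.mem_univ i₀), hi₀] at sum_le
  rw [smul_eq_mul, mul_one] at card_le_sum
  lia

theorem exists_ne_zero_forall_nullVectors_eq_bot {A : Submodule K (U →ₗ[K] V)}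
    (hA : finrank K (U →ₗ[K] V) < finrank K A + finrank K V) :
    ∃ y : V, y ≠ 0 ∧ ∀ φ : Dual K V, φ y ≠ 0 → nullVectors A φ = ⊥ := by
  by_contra! hbad
  have hspan : span K {φ | nullVectors A φ ≠ ⊥} = ⊤ :=
    span_eq_top_of_ne_zero fun y hy ↦ (hbad y hy).imp fun _ h ↦ h.symm
  have : Nontrivial V := by
    have := A.finrank_le
    exact nontrivial_of_finrank_pos (R := K) (by lia)
  obtain ⟨y, hy⟩ := exists_ne (0 : V)
  obtain ⟨φ, hφy, hφ⟩ := hbad y hy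
  have hφ0 : φ ≠ 0 := by rintro rfl; exact hφy rfl
  have one_le := one_le_finrank_iff.2 hφ
  have := finrank_nullVectors_add_le_of_span_eq_top hspan hφ0
  lia

end NullVectors

section KerSlice

variable {K U V : Type*} [Field K] [AddCommGroup U] [Module K U] [AddCommGroup V] [Module K V]

/-- The maps of `A` whose range lies in `ker φ`, seen as maps into `ker φ`. -/
def kerSlice (A : Submodule K (U →ₗ[K] V)) (φ : Dual K V) :
    Submodule K (U →ₗ[K] LinearMap.ker φ) :=
  A.comap (LinearMap.compRight K (LinearMap.ker φ).subtype)

theorem mem_nullVectors_kerSlice {A : Submodule K (U →ₗ[K] V)} {φ ψ : Dual K V} {a b : U}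
    (hab : ∀ s ∈ A, φ (s a) + ψ (s b) = 0) :
    b ∈ nullVectors (kerSlice A φ) ((LinearMap.ker φ).dualRestrict ψ) := by
  refine mem_nullVectors.2 fun s hs ↦ ?_
  simpa using hab _ hs

theorem exists_eq_smul_of_finrank_nullVectors_kerSlice_le_one [FiniteDimensional K U]
    {A : Submodule K (U →ₗ[K] V)} {φ ψ : Dual K V} (hφ : nullVectors A φ = ⊥)
    (hψ : finrank K (nullVectors (kerSlice A φ) ((LinearMap.ker φ).dualRestrict ψ)) ≤ 1)
    {a b a' b' : U} (hab : ∀ s ∈ A, φ (s a) + ψ (s b) = 0)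
    (hab' : ∀ s ∈ A, φ (s a') + ψ (s b') = 0) (hb : b ≠ 0) :
    ∃ l : K, a' = l • a ∧ b' = l • b := by
  let N := nullVectors (kerSlice A φ) ((LinearMap.ker φ).dualRestrict ψ)
  have b_mem : b ∈ N := mem_nullVectors_kerSlice hab
  have b'_mem : b' ∈ N := mem_nullVectors_kerSlice hab'
  have N_le : N ≤ span K {b} := by
    refine (eq_of_le_of_finrank_le ((span_singleton_le_iff_mem b N).2 b_mem) ?_).ge
    rwa [finrank_span_singleton hb]
  obtain ⟨l, rfl⟩ := mem_span_singleton.1 (N_le b'_mem)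
  refine ⟨l, sub_eq_zero.1 ?_, rfl⟩
  rw [← mem_bot K, ← hφ, mem_nullVectors]
  intro s hs
  have h := hab s hs
  have h' := hab' s hs
  simp only [map_sub, map_smul, smul_eq_mul] at h' ⊢
  linear_combination h' - l * h

variable [FiniteDimensional K U] [FiniteDimensional K V]

theorem finrank_le_finrank_kerSlice_add (A : Submodule K (U →ₗ[K] V)) (φ : Dual K V) :
    finrank K A ≤ finrank K (kerSlice A φ) + finrank K U := by
  let g : A →ₗ[K] Dual K U := LinearMap.compRight K φ ∘ₗ A.subtype
  let toSlice : LinearMap.ker g →ₗ[K] kerSlice A φ :=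
    { toFun s := ⟨s.1.1.codRestrict (LinearMap.ker φ) (LinearMap.congr_fun s.2), s.1.2⟩
      map_add' _ _ := rfl
      map_smul' _ _ := rfl }
  have toSlice_injective : Function.Injective toSlice := fun s t hst ↦
    Subtype.ext <| Subtype.ext <| LinearMap.ext fun u ↦
      congrArg Subtype.val (LinearMap.congr_fun (congrArg Subtype.val hst) u)
  have range_le := (LinearMap.range g).finrank_le
  have ker_le := LinearMap.finrank_le_finrank_of_injective toSlice_injective
  have rank_nullity := g.finrank_range_add_finrank_ker
  rw [Subspace.dual_finrank_eq] at range_le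
  lia

theorem finrank_nullVectors_kerSlice_add_le {A : Submodule K (U →ₗ[K] V)}
    {E : Submodule K (Dual K V)} {φ ψ : Dual K V} (hφ0 : φ ≠ 0) (hφE : φ ∈ E) (hψE : ψ ∉ E)
    (hnull : ∀ χ ∉ E, nullVectors (kerSlice A φ) ((LinearMap.ker φ).dualRestrict χ) ≠ ⊥) :
    finrank K (nullVectors (kerSlice A φ) ((LinearMap.ker φ).dualRestrict ψ)) +
      finrank K V + finrank K A ≤ finrank K (U →ₗ[K] V) + 2 := by
  have span_eq_top : span K {χ | nullVectors (kerSlice A φ) χ ≠ ⊥} = ⊤ := by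
    have image_subset : (LinearMap.ker φ).dualRestrict '' (E : Set (Dual K V))ᶜ ⊆
        {χ | nullVectors (kerSlice A φ) χ ≠ ⊥} := Set.image_subset_iff.2 hnull
    have E_ne_top : E ≠ ⊤ := by rintro rfl; exact hψE mem_top
    rw [eq_top_iff, ← LinearMap.range_eq_top.2 Subspace.dualRestrict_surjective,
      LinearMap.range_eq_map, ← span_compl_eq_top_of_ne_top E_ne_top, map_span]
    exact span_mono image_subset
  have restrict_ne_zero : (LinearMap.ker φ).dualRestrict ψ ≠ 0 := by
    intro h
    have hψ : ψ ∈ span K (Set.range fun _ : Unit ↦ φ) := mem_span_of_iInf_ker_le_ker <| by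
      rw [iInf_const]
      exact fun v hv ↦ LinearMap.congr_fun h ⟨v, hv⟩
    rw [Set.range_const] at hψ
    exact hψE ((span_singleton_le_iff_mem φ E).2 hφE hψ)
  have slice_bound := finrank_nullVectors_add_le_of_span_eq_top span_eq_top restrict_ne_zero
  have slice_le := finrank_le_finrank_kerSlice_add A φ
  have ker_add_one := Dual.finrank_ker_add_one_of_ne_zero hφ0
  rw [finrank_linearMap] at slice_bound ⊢
  rw [← ker_add_one, mul_add_one]
  lia

end KerSlice

section LocalFunctionals

variable {K U V ι : Type*} [Field K] [AddCommGroup U] [Module K U] [AddCommGroup V] [Module K V]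

/-- The functionals `φ` for which `φ ∘ F` is given by evaluation at `x`, where `F` assigns a vector
to each member of a family `S` of linear maps. The map `F` is local, with vector `x`, if and only if
this is the whole dual of `V`. -/
def localFunctionals (S : ι → U →ₗ[K] V) (F : ι → V) (x : U) : Submodule K (Dual K V) :=
  (span K (Set.range fun i ↦ F i - S i x)).dualAnnihilator

variable {S : ι → U →ₗ[K] V} {F : ι → V} {φ ψ : Dual K V} {x q r : U}

theorem mem_localFunctionals :
    φ ∈ localFunctionals S F x ↔ ∀ i, φ (F i) = φ (S i x) := by
  refine (mem_dualAnnihilator φ).trans ((span_le (p := LinearMap.ker φ)).trans ?_)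
  simp [Set.range_subset_iff, sub_eq_zero]

theorem eq_apply_of_localFunctionals_eq_top (h : localFunctionals S F x = ⊤) (i : ι) :
    F i = S i x := by
  rw [← sub_eq_zero, ← forall_dual_apply_eq_zero_iff K]
  intro φ
  have hφ : φ ∈ localFunctionals S F x := h ▸ mem_top
  rw [map_sub, mem_localFunctionals.1 hφ, sub_self]

theorem apply_sub_add_apply_smul_sub_eq_zero {t : K} (hφ : φ ∈ localFunctionals S F x)
    (hψ : ψ ∈ localFunctionals S F q) (hr : φ + t • ψ ∈ localFunctionals S F r) :
    ∀ s ∈ span K (Set.range S), φ (s (x - r)) + ψ (s (t • (q - r))) = 0 := by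
  intro s hs
  induction hs using span_induction with
  | mem s hs =>
    obtain ⟨i, rfl⟩ := hs
    have hφi := mem_localFunctionals.1 hφ i
    have hψi := mem_localFunctionals.1 hψ i
    have hri := mem_localFunctionals.1 hr i
    simp only [LinearMap.add_apply, LinearMap.smul_apply, smul_eq_mul] at hri
    simp only [map_sub, map_smul, smul_eq_mul]
    linear_combination hri - hφi - t * hψi
  | zero => simp
  | add s s' _ _ hs hs' =>
    simp only [LinearMap.add_apply, map_add]
    linear_combination hs + hs'
  | smul c s _ hs =>
    simp only [LinearMap.smul_apply, map_smul, smul_eq_mul] at hs ⊢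
    linear_combination c * hs

theorem eq_of_mem_localFunctionals (hgood : nullVectors (span K (Set.range S)) φ = ⊥)
    (hx : φ ∈ localFunctionals S F x) (hr : φ ∈ localFunctionals S F r) : x = r := by
  rw [← sub_eq_zero, ← mem_bot K, ← hgood, mem_nullVectors]
  simpa using apply_sub_add_apply_smul_sub_eq_zero (t := 0) hx hx (by simpa using hr)

theorem sub_ne_zero_of_notMem_localFunctionals {t : K}
    (hgood : nullVectors (span K (Set.range S)) φ = ⊥)
    (hφ : φ ∈ localFunctionals S F x) (hψx : ψ ∉ localFunctionals S F x)
    (hψ : ψ ∈ localFunctionals S F q) (hr : φ + t • ψ ∈ localFunctionals S F r) :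
    q - r ≠ 0 := by
  intro hqr
  obtain rfl := sub_eq_zero.1 hqr
  have hφq : φ ∈ localFunctionals S F q := (Submodule.add_mem_iff_left _ (smul_mem _ t hψ)).1 hr
  obtain rfl := eq_of_mem_localFunctionals hgood hφ hφq
  exact hψx hψ

-- Adding a multiple of `φ` to `χ` changes neither `χ ∉ localFunctionals S F x` nor the restriction
-- of `χ` to `ker φ`, so one may assume `χ y = 1`; then `χ` and `φ - c • χ` do not vanish at `y`.
theorem nullVectors_kerSlice_ne_bot {y : V} {c : K} (hc0 : c ≠ 0) (hc1 : c ≠ 1)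
    (hgood : ∀ χ : Dual K V, χ y ≠ 0 → nullVectors (span K (Set.range S)) χ = ⊥)
    (hlocal : ∀ χ : Dual K V, χ y ≠ 0 → ∃ z, χ ∈ localFunctionals S F z)
    (hφy : φ y = 1) (hφ : φ ∈ localFunctionals S F x) (hψ : ψ ∉ localFunctionals S F x) :
    nullVectors (kerSlice (span K (Set.range S)) φ) ((LinearMap.ker φ).dualRestrict ψ) ≠ ⊥ := by
  let χ := ψ + (1 - ψ y) • φ
  have hχy : χ y = 1 := by simp [χ, hφy]
  have hχx : χ ∉ localFunctionals S F x := fun h ↦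
    hψ ((Submodule.add_mem_iff_left _ (smul_mem _ _ hφ)).1 h)
  have hχψ : (LinearMap.ker φ).dualRestrict χ = (LinearMap.ker φ).dualRestrict ψ := by
    ext v
    simp [χ]
  obtain ⟨q, hq⟩ := hlocal χ (by simp [hχy])
  obtain ⟨r, hr⟩ := hlocal (φ + -c • χ) (by
    simpa [hφy, hχy, ← sub_eq_add_neg, sub_eq_zero] using hc1.symm)
  have hqr : q - r ≠ 0 :=
    sub_ne_zero_of_notMem_localFunctionals (hgood φ (by simp [hφy])) hφ hχx hq hr
  rw [← hχψ]
  exact (Submodule.ne_bot_iff _).2 ⟨-c • (q - r),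
    mem_nullVectors_kerSlice (apply_sub_add_apply_smul_sub_eq_zero hφ hq hr),
    smul_ne_zero (neg_ne_zero.2 hc0) hqr⟩

theorem exists_eq_smul_of_two_proportions {c l : K} (hc0 : c ≠ 0) (hc1 : c ≠ 1) {x q r r' : U}
    (hqr : q - r ≠ 0) (hx : x - r' = l • (x - r)) (hq : c • (q - r') = l • (q - r)) :
    ∃ k : K, x - r = k • (q - r) := by
  have relation : (c * (1 - l)) • (x - r) = (c - l) • (q - r) := by
    linear_combination (norm := module) c • hx - hq
  have hl : 1 - l ≠ 0 := by
    intro hl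
    obtain rfl := sub_eq_zero.1 hl
    rw [sub_self, mul_zero, zero_smul, eq_comm] at relation
    exact smul_ne_zero (sub_ne_zero.2 hc1) hqr relation
  exact ⟨(c * (1 - l))⁻¹ * (c - l), by
    rw [mul_smul, ← relation, inv_smul_smul₀ (mul_ne_zero hc0 hl)]⟩

theorem mem_localFunctionals_of_sub_eq_smul_sub {y : V} {k : K}
    (hgood : ∀ χ : Dual K V, χ y ≠ 0 → nullVectors (span K (Set.range S)) χ = ⊥)
    (hφy : φ y = 1) (hψy : ψ y = 0) (hφ : φ ∈ localFunctionals S F x)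
    (hr : φ + ψ ∈ localFunctionals S F r)
    (relation : ∀ s ∈ span K (Set.range S), φ (s (x - r)) + ψ (s (q - r)) = 0)
    (hqr : q - r ≠ 0) (hk : x - r = k • (q - r)) :
    ψ ∈ localFunctionals S F x := by
  have null_mem : q - r ∈ nullVectors (span K (Set.range S)) (k • φ + ψ) :=
    mem_nullVectors.2 fun s hs ↦ by simpa [hk] using relation s hs
  have hk0 : k = 0 := by
    by_contra hk0
    rw [hgood (k • φ + ψ) (by simpa [hφy, hψy] using hk0), mem_bot] at null_mem
    exact hqr null_mem
  rw [hk0, zero_smul, sub_eq_zero] at hk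
  exact (Submodule.add_mem_iff_right _ hφ).1 (hk ▸ hr)

variable [FiniteDimensional K U] [FiniteDimensional K V]

theorem localFunctionals_eq_top_of_finrank_add_two_le {y : V} {c : K} (hc0 : c ≠ 0) (hc1 : c ≠ 1)
    (hdim : finrank K (U →ₗ[K] V) + 2 ≤ finrank K (span K (Set.range S)) + finrank K V)
    (hgood : ∀ χ : Dual K V, χ y ≠ 0 → nullVectors (span K (Set.range S)) χ = ⊥)
    (hlocal : ∀ χ : Dual K V, χ y ≠ 0 → ∃ z, χ ∈ localFunctionals S F z)
    (hφy : φ y = 1) (hφ : φ ∈ localFunctionals S F x) :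
    localFunctionals S F x = ⊤ := by
  refine eq_top_iff'.2 fun ψ ↦ by_contra fun hψ ↦ ?_
  have hφ0 : φ ≠ 0 := by rintro rfl; simp at hφy
  have hnull (χ) (hχ : χ ∉ localFunctionals S F x) :=
    nullVectors_kerSlice_ne_bot hc0 hc1 hgood hlocal hφy hφ hχ
  have := finrank_nullVectors_kerSlice_add_le hφ0 hφ hψ hnull
  have := one_le_finrank_iff.2 (hnull ψ hψ)
  lia

theorem localFunctionals_eq_top_of_forall_exists_mem {y : V} {c : K} (hc0 : c ≠ 0) (hc1 : c ≠ 1)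
    (hdim : finrank K (U →ₗ[K] V) + 1 ≤ finrank K (span K (Set.range S)) + finrank K V)
    (hgood : ∀ χ : Dual K V, χ y ≠ 0 → nullVectors (span K (Set.range S)) χ = ⊥)
    (hlocal : ∀ χ : Dual K V, ∃ z, χ ∈ localFunctionals S F z)
    (hφy : φ y = 1) (hφ : φ ∈ localFunctionals S F x) :
    localFunctionals S F x = ⊤ := by
  refine eq_top_iff'.2 fun ψ₀ ↦ by_contra fun hψ₀ ↦ ?_
  have hφ0 : φ ≠ 0 := by rintro rfl; simp at hφy
  have hφgood := hgood φ (by simp [hφy])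
  let ψ := ψ₀ - ψ₀ y • φ
  have hψy : ψ y = 0 := by simp [ψ, hφy]
  have hψ : ψ ∉ localFunctionals S F x := fun h ↦
    hψ₀ ((Submodule.sub_mem_iff_left _ (smul_mem _ _ hφ)).1 h)
  obtain ⟨q, hq⟩ := hlocal ψ
  obtain ⟨r, hr⟩ := hlocal (φ + (1 : K) • ψ)
  obtain ⟨r', hr'⟩ := hlocal (φ + c • ψ)
  have relation := apply_sub_add_apply_smul_sub_eq_zero hφ hq hr
  have relation' := apply_sub_add_apply_smul_sub_eq_zero hφ hq hr'
  rw [one_smul] at relation hr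
  have hqr : q - r ≠ 0 :=
    sub_ne_zero_of_notMem_localFunctionals hφgood hφ hψ hq (t := 1) (by rwa [one_smul])
  have finrank_le_one : finrank K (nullVectors (kerSlice (span K (Set.range S)) φ)
      ((LinearMap.ker φ).dualRestrict ψ)) ≤ 1 := by
    have := finrank_nullVectors_kerSlice_add_le hφ0 hφ hψ fun χ hχ ↦
      nullVectors_kerSlice_ne_bot hc0 hc1 hgood (fun χ _ ↦ hlocal χ) hφy hφ hχ
    lia
  obtain ⟨l, hx, hql⟩ := exists_eq_smul_of_finrank_nullVectors_kerSlice_le_one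
    hφgood finrank_le_one relation relation' hqr
  obtain ⟨k, hk⟩ := exists_eq_smul_of_two_proportions hc0 hc1 hqr hx hql
  exact hψ (mem_localFunctionals_of_sub_eq_smul_sub hgood hφy hψy hφ hr relation hqr hk)

end LocalFunctionals

section AffineSubspaces

variable {K W : Type*} [Ring K] [AddCommGroup W] [Module K W] (𝒮 : AffineSubspace K W)

theorem direction_le_span_range_val :
    𝒮.direction ≤ span K (Set.range ((↑) : 𝒮 → W)) := by
  rw [𝒮.direction_eq_vectorSpan, vectorSpan_def, span_le]
  rintro _ ⟨s, hs, t, ht, rfl⟩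
  exact sub_mem (subset_span ⟨⟨s, hs⟩, rfl⟩) (subset_span ⟨⟨t, ht⟩, rfl⟩)

theorem direction_lt_span_range_val [Nonempty 𝒮] (h0 : 0 ∉ 𝒮) :
    𝒮.direction < span K (Set.range ((↑) : 𝒮 → W)) := by
  obtain ⟨s⟩ := ‹Nonempty 𝒮›
  refine SetLike.lt_iff_le_and_exists.2
    ⟨direction_le_span_range_val 𝒮, (s : W), subset_span ⟨s, rfl⟩, fun hs ↦ h0 ?_⟩
  simpa using AffineSubspace.vadd_mem_of_mem_direction (neg_mem hs) s.2

end AffineSubspaces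

section RangeCompatible

variable {K U V : Type*} [Field K] [AddCommGroup U] [Module K U] [FiniteDimensional K U]
  [AddCommGroup V] [Module K V] {𝒮 : AffineSubspace K (U →ₗ[K] V)} [Nonempty 𝒮]
  {F : 𝒮 →ᵃ[K] V} {φ : Dual K V}

-- `φ ∘ F.linear` vanishes on the kernel of `t ↦ φ ∘ t`, so it factors through this map into the
-- dual of `U`, where every functional is the evaluation at some vector.
theorem exists_mem_localFunctionals_of_comp_eq_zero
    (hF : ∀ s : 𝒮, F s ∈ LinearMap.range (s : U →ₗ[K] V))
    (s₀ : 𝒮) (hs₀ : φ ∘ₗ (s₀ : U →ₗ[K] V) = 0) :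
    ∃ x, φ ∈ localFunctionals ((↑) : 𝒮 → U →ₗ[K] V) F x := by
  let g : 𝒮.direction →ₗ[K] Dual K U := LinearMap.compRight K φ ∘ₗ 𝒮.direction.subtype
  have apply_eq_zero (s : 𝒮) (hs : φ ∘ₗ (s : U →ₗ[K] V) = 0) : φ (F s) = 0 := by
    obtain ⟨u, hu⟩ := hF s
    exact hu ▸ LinearMap.congr_fun hs u
  have apply_vadd (t : 𝒮.direction) : φ (F (t +ᵥ s₀)) = φ (F.linear t) := by
    rw [AffineMap.map_vadd, vadd_eq_add, map_add, apply_eq_zero s₀ hs₀, add_zero]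
  have comp_vadd (t : 𝒮.direction) : φ ∘ₗ ((t +ᵥ s₀ : 𝒮) : U →ₗ[K] V) = g t := by
    change φ ∘ₗ ((t : U →ₗ[K] V) + (s₀ : U →ₗ[K] V)) = φ ∘ₗ (t : U →ₗ[K] V)
    rw [LinearMap.comp_add, hs₀, add_zero]
  have mem_range : φ ∘ₗ F.linear ∈ LinearMap.range g.dualMap := by
    rw [LinearMap.range_dualMap_eq_dualAnnihilator_ker, mem_dualAnnihilator]
    intro t ht
    exact (apply_vadd t).symm.trans (apply_eq_zero _ ((comp_vadd t).trans ht))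
  obtain ⟨h, hh⟩ := mem_range
  refine ⟨(evalEquiv K U).symm h, mem_localFunctionals.2 fun s ↦ ?_⟩
  obtain ⟨t, rfl⟩ : ∃ t : 𝒮.direction, t +ᵥ s₀ = s := ⟨s -ᵥ s₀, vsub_vadd s s₀⟩
  calc φ (F (t +ᵥ s₀)) = h (g t) := (apply_vadd t).trans (LinearMap.congr_fun hh t).symm
    _ = g t ((evalEquiv K U).symm h) := (apply_evalEquiv_symm_apply K U _ _).symm
    _ = φ (((t +ᵥ s₀ : 𝒮) : U →ₗ[K] V) ((evalEquiv K U).symm h)) := by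
        rw [← comp_vadd, LinearMap.comp_apply]

theorem exists_mem_localFunctionals_of_nullVectors_eq_bot
    (hF : ∀ s : 𝒮, F s ∈ LinearMap.range (s : U →ₗ[K] V))
    (hφ : nullVectors 𝒮.direction φ = ⊥) :
    ∃ x, φ ∈ localFunctionals ((↑) : 𝒮 → U →ₗ[K] V) F x := by
  obtain ⟨s⟩ := ‹Nonempty 𝒮›
  obtain ⟨t, ht, hts⟩ : -(φ ∘ₗ (s : U →ₗ[K] V)) ∈ 𝒮.direction.map (LinearMap.compRight K φ) :=
    map_compRight_eq_top_of_nullVectors_eq_bot hφ ▸ mem_top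
  refine exists_mem_localFunctionals_of_comp_eq_zero hF ((⟨t, ht⟩ : 𝒮.direction) +ᵥ s) ?_
  change φ ∘ₗ (t + (s : U →ₗ[K] V)) = 0
  rw [LinearMap.comp_add, ← LinearMap.compRight_apply K, hts, neg_add_cancel]

end RangeCompatible

/-- Let `K` be a field with more than 2 elements, `U` and `V`
finite-dimensional `K`-vector spaces, and `𝒮` an affine subspace of `L(U,V)` with
`codim 𝒮 ≤ dim V − 1` (expressed as `dim L(U,V) + 1 ≤ dim 𝒮 + dim V`). Then every
range-compatible affine map `F : 𝒮 → V` is local. -/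
theorem range_compatible_affine_map_is_local_of_codim_le_dimV_sub_one
    (K U V : Type*) [Field K] (hK : 2 < Cardinal.mk K)
    [AddCommGroup U] [Module K U] [FiniteDimensional K U]
    [AddCommGroup V] [Module K V] [FiniteDimensional K V]
    (𝒮 : AffineSubspace K (U →ₗ[K] V)) [Nonempty ↥𝒮]
    (hcodim : Module.finrank K (U →ₗ[K] V) + 1 ≤
      Module.finrank K 𝒮.direction + Module.finrank K V)
    (F : ↥𝒮 →ᵃ[K] V)
    (hrc : ∀ s : ↥𝒮, F s ∈ LinearMap.range (s : U →ₗ[K] V)) :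
    ∃ x : U, ∀ s : ↥𝒮, F s = (s : U →ₗ[K] V) x := by
  obtain ⟨c, hc0, hc1⟩ := exists_ne_ne_of_two_lt_mk hK 0 1
  obtain ⟨y, hy, hgood⟩ := exists_ne_zero_forall_nullVectors_eq_bot (Nat.lt_of_succ_le hcodim)
  have hlocal (χ : Dual K V) (hχ : χ y ≠ 0) :=
    exists_mem_localFunctionals_of_nullVectors_eq_bot hrc (hgood χ hχ)
  have direction_le := direction_le_span_range_val 𝒮
  have hgood_span (χ : Dual K V) (hχ : χ y ≠ 0) :=
    eq_bot_mono (nullVectors_anti direction_le χ) (hgood χ hχ)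
  obtain ⟨φ, hφy⟩ := Projective.exists_dual_eq_one K hy
  obtain ⟨x, hφ⟩ := hlocal φ (by simp [hφy])
  refine ⟨x, eq_apply_of_localFunctionals_eq_top ?_⟩
  by_cases h0 : 0 ∈ 𝒮
  · have := finrank_mono direction_le
    exact localFunctionals_eq_top_of_forall_exists_mem hc0 hc1 (by lia) hgood_span
      (fun χ ↦ exists_mem_localFunctionals_of_comp_eq_zero hrc ⟨0, h0⟩ χ.comp_zero) hφy hφ
  · have := finrank_lt_finrank_of_lt (direction_lt_span_range_val 𝒮 h0)
    exact localFunctionals_eq_top_of_finrank_add_two_le hc0 hc1 (by lia) hgood_span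
      hlocal hφy hφ
end

section
/- Let 𝒮 be an affine subspace of L(U,V) with codim 𝒮 ≤ dim V − 1, let F : 𝒮 → V be a range-compatible affine map, let S be the translation vector space of 𝒮 and F⃗ : S → V the linear part of F. Then: (a) for every 1-dimensional linear subspace D of V that is contained in the kernel of every rank-1 operator of S⊥, and for every rank-1 operator t ∈ S with range(t) ≠ D, one has F⃗(t) ∈ range(t); (b) there exists a 1-dimensional linear subspace D of V contained in the kernel of every rank-1 operator of S⊥; (c) if codim 𝒮 < dim V − 1, then F⃗(t) ∈ range(t) for every rank-1 operator t ∈ S. -/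
attribute [local instance] AffineSubspace.toAddTorsor

/-!
Let `W ⊆ V` be the common kernel of the rank-one operators in `S⊥`. If `d ∈ W` and `ψ` is a linear
form on `V` with `ψ d ≠ 0`, then `s ↦ ψ ∘ s` maps `S` onto the dual of `U`: otherwise some `u ≠ 0`
annihilates the image, and the rank-one operator `v ↦ ψ v • u` of `S⊥` does not kill `d`. Hence
some `s ∈ 𝒮` satisfies `ψ ∘ s = 0`, and for `t ∈ S` with `ψ ∘ t = 0` range-compatibility at `s`
and `t + s` gives `ψ (F⃗ t) = 0`. When `d ∉ range t`, the linear forms with `ψ ∘ t = 0` and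
`ψ d ≠ 0` suffice to separate points from `range t`, so `F⃗ t ∈ range t`. Finally, `W` is the common
kernel of at most `dim S⊥ = codim S` linearly independent rank-one operators, each with a kernel
of codimension one, so `dim V ≤ dim W + codim S`.
-/

open Module LinearMap

section LinearAlgebra

theorem iInf_ker_le_ker_of_mem_span {R M N ι : Type*} [CommSemiring R] [AddCommMonoid M]
    [Module R M] [AddCommMonoid N] [Module R N] {f : ι → M →ₗ[R] N} {t : M →ₗ[R] N}
    (ht : t ∈ Submodule.span R (Set.range f)) : ⨅ i, ker (f i) ≤ ker t := by
  intro v hv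
  have hle : Submodule.span R (Set.range f) ≤ ker (applyₗ (R := R) (M₂ := N) v) := by
    rw [Submodule.span_le]
    rintro _ ⟨i, rfl⟩
    exact (Submodule.mem_iInf _).1 hv i
  exact hle ht

variable {K V : Type*} [DivisionRing K] [AddCommGroup V] [Module K V]

theorem mem_of_forall_dual_apply_eq_zero {p : Submodule K V} {d y : V} (hd : d ∉ p)
    (h : ∀ ψ : V →ₗ[K] K, p ≤ ker ψ → ψ d ≠ 0 → ψ y = 0) : y ∈ p := by
  by_contra hy
  obtain ⟨φ, hφd, hφp⟩ := Submodule.exists_le_ker_of_notMem hd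
  obtain ⟨ψ, hψy, hψp⟩ := Submodule.exists_le_ker_of_notMem hy
  by_cases hψd : ψ d = 0
  · have hsum_le : p ≤ ker (ψ + φ) := fun v hv ↦ by
      rw [mem_ker, LinearMap.add_apply, hψp hv, hφp hv, add_zero]
    have hsum : (ψ + φ) y = 0 := h (ψ + φ) hsum_le (by simpa [hψd] using hφd)
    rw [LinearMap.add_apply, h φ hφp hφd, add_zero] at hsum
    exact hψy hsum
  · exact hψy (h ψ hψp hψd)

theorem exists_le_finrank_eq {W : Submodule K V} {k : ℕ} (hk : k ≤ finrank K W) :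
    ∃ D ≤ W, finrank K D = k := by
  obtain ⟨v, hv⟩ := exists_linearIndependent_of_le_finrank hk
  refine ⟨(Submodule.span K (Set.range v)).map W.subtype, Submodule.map_subtype_le _ _, ?_⟩
  rw [Submodule.finrank_map_subtype_eq, finrank_span_eq_card hv, Fintype.card_fin]

variable {U : Type*} [AddCommGroup U] [Module K U]

theorem finrank_le_finrank_inf_ker_add_sum [FiniteDimensional K V] {ι : Type*} (s : Finset ι)
    (f : ι → V →ₗ[K] U) :
    finrank K V ≤ finrank K (s.inf fun i ↦ ker (f i) : Submodule K V) +
      ∑ i ∈ s, finrank K (range (f i)) := by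
  classical
  induction s using Finset.induction_on with
  | empty => rw [Finset.inf_empty, finrank_top]; exact le_self_add
  | insert i s hi ih =>
    rw [Finset.inf_insert, Finset.sum_insert hi]
    have rank_nullity := (f i).finrank_range_add_finrank_ker
    have sup_inf := Submodule.finrank_sup_add_finrank_inf_eq (ker (f i)) (s.inf fun j ↦ ker (f j))
    have sup_le := (ker (f i) ⊔ s.inf fun j ↦ ker (f j)).finrank_le
    omega

end LinearAlgebra

section OperatorSpaces

variable {K U V : Type*} [Field K] [AddCommGroup U] [Module K U] [AddCommGroup V] [Module K V]

/-- The common kernel of the rank-one operators belonging to `T`. For `T = S⊥`, its lines are the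
subspaces `D` of the theorem. -/
def rankOneKernel (T : Submodule K (V →ₗ[K] U)) : Submodule K V :=
  ⨅ (t ∈ T) (_ : finrank K (range t) = 1), ker t

theorem le_rankOneKernel_iff {T : Submodule K (V →ₗ[K] U)} {D : Submodule K V} :
    D ≤ rankOneKernel T ↔ ∀ t ∈ T, finrank K (range t) = 1 → D ≤ ker t := by
  simp only [rankOneKernel, le_iInf_iff]

theorem finrank_le_finrank_rankOneKernel_add_finrank [FiniteDimensional K V]
    (T : Submodule K (V →ₗ[K] U)) [FiniteDimensional K T] :
    finrank K V ≤ finrank K (rankOneKernel T) + finrank K T := by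
  let R : Set (V →ₗ[K] U) := {t ∈ T | finrank K (range t) = 1}
  have hspan : Submodule.span K R ≤ T := Submodule.span_le.2 fun t ht ↦ ht.1
  have := Submodule.finiteDimensional_of_le hspan
  obtain ⟨f, hfR, hf, -⟩ := Submodule.exists_fun_fin_finrank_span_eq K R
  have hker : ⨅ i, ker (f i) ≤ rankOneKernel T := le_rankOneKernel_iff.2 fun t htT htr ↦
    iInf_ker_le_ker_of_mem_span (hf.ge (Submodule.subset_span ⟨htT, htr⟩))
  calc finrank K V
      ≤ finrank K (⨅ i, ker (f i) : Submodule K V) + ∑ i, finrank K (range (f i)) := by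
        rw [← Finset.inf_univ_eq_iInf]
        exact finrank_le_finrank_inf_ker_add_sum Finset.univ f
    _ = finrank K (⨅ i, ker (f i) : Submodule K V) + finrank K (Submodule.span K R) := by
        simp [fun i ↦ (hfR i).2]
    _ ≤ finrank K (rankOneKernel T) + finrank K T :=
        add_le_add (Submodule.finrank_mono hker) (Submodule.finrank_mono hspan)

section TraceOrthogonal

variable (K U V) in
/-- The trace pairing `(t, s) ↦ tr (t ∘ s)` between `L(V,U)` and `L(U,V)`, curried as a map into the
dual of `L(U,V)` so that orthogonality can be read off dual annihilators. -/
noncomputable def tracePairing : (V →ₗ[K] U) →ₗ[K] Dual K (U →ₗ[K] V) :=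
  (llcomp K U V U).compr₂ (trace K U)

theorem tracePairing_apply (t : V →ₗ[K] U) (s : U →ₗ[K] V) :
    tracePairing K U V t s = trace K U (t ∘ₗ s) := rfl

/-- The orthogonal `S⊥` of a space of operators with respect to the trace pairing. -/
noncomputable def traceOrthogonal (S : Submodule K (U →ₗ[K] V)) : Submodule K (V →ₗ[K] U) :=
  S.dualAnnihilator.comap (tracePairing K U V)

theorem mem_traceOrthogonal_iff {S : Submodule K (U →ₗ[K] V)} {t : V →ₗ[K] U} :
    t ∈ traceOrthogonal S ↔ ∀ s ∈ S, trace K U (t ∘ₗ s) = 0 :=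
  Submodule.mem_dualAnnihilator _

variable [FiniteDimensional K U]

theorem tracePairing_smulRight_left (ψ : Dual K V) (u : U) (s : U →ₗ[K] V) :
    tracePairing K U V (ψ.smulRight u) s = ψ (s u) :=
  trace_smulRight (ψ ∘ₗ s) u

theorem tracePairing_smulRight_right (t : V →ₗ[K] U) (φ : Dual K U) (v : V) :
    tracePairing K U V t (φ.smulRight v) = φ (t v) := by
  have hcomp : t ∘ₗ φ.smulRight v = φ.smulRight (t v) := by ext; simp
  rw [tracePairing_apply, hcomp, trace_smulRight]

theorem tracePairing_injective : Function.Injective (tracePairing K U V) := by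
  rw [injective_iff_map_eq_zero]
  intro t ht
  ext v
  refine (forall_dual_apply_eq_zero_iff K (t v)).1 fun φ ↦ ?_
  rw [← tracePairing_smulRight_right, ht, LinearMap.zero_apply]

theorem finrank_traceOrthogonal_add_finrank_le [FiniteDimensional K V]
    (S : Submodule K (U →ₗ[K] V)) :
    finrank K (traceOrthogonal S) + finrank K S ≤ finrank K (U →ₗ[K] V) := by
  rw [← Subspace.finrank_add_finrank_dualAnnihilator_eq S, add_comm,
    (Submodule.equivMapOfInjective _ tracePairing_injective (traceOrthogonal S)).finrank_eq]
  exact Nat.add_le_add_left (Submodule.finrank_mono (Submodule.map_comap_le _ _)) _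

theorem finrank_add_finrank_le_finrank_rankOneKernel_add [FiniteDimensional K V]
    (S : Submodule K (U →ₗ[K] V)) :
    finrank K S + finrank K V ≤
      finrank K (rankOneKernel (traceOrthogonal S)) + finrank K (U →ₗ[K] V) := by
  have hker := finrank_le_finrank_rankOneKernel_add_finrank (traceOrthogonal S)
  have horth := finrank_traceOrthogonal_add_finrank_le S
  omega

theorem exists_mem_comp_eq_of_mem_rankOneKernel {S : Submodule K (U →ₗ[K] V)} {d : V}
    (hd : d ∈ rankOneKernel (traceOrthogonal S)) {ψ : Dual K V} (hψ : ψ d ≠ 0) (g : Dual K U) :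
    ∃ s ∈ S, ψ ∘ₗ s = g := by
  suffices hmap : S.map (compRight K ψ) = ⊤ from
    Submodule.mem_map.1 (hmap ▸ Submodule.mem_top : g ∈ S.map (compRight K ψ))
  by_contra hne
  obtain ⟨f, hf, hle⟩ := Submodule.exists_le_ker_of_lt_top _ (lt_top_iff_ne_top.2 hne)
  obtain ⟨u, rfl⟩ := (evalEquiv K U).surjective f
  have hu : u ≠ 0 := by rintro rfl; exact hf (map_zero _)
  have hψ0 : ψ ≠ 0 := by rintro rfl; exact hψ rfl
  have horth : ψ.smulRight u ∈ traceOrthogonal S := mem_traceOrthogonal_iff.2 fun s hs ↦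
    (tracePairing_smulRight_left ψ u s).trans (hle (Submodule.mem_map_of_mem hs))
  have hrank : finrank K (range (ψ.smulRight u)) = 1 := by
    rw [range_smulRight_apply hψ0, finrank_span_singleton hu]
  have hzero : ψ d • u = 0 := le_rankOneKernel_iff.1 le_rfl _ horth hrank hd
  exact smul_ne_zero hψ hu hzero

end TraceOrthogonal

section RangeCompatible

variable {𝒮 : AffineSubspace K (U →ₗ[K] V)}

/-- Range-compatibility of a map on an affine subspace of operators. The map is a bare function, so
that affine maps are covered through their coercion. -/
def IsRangeCompatible (F : 𝒮 → V) : Prop :=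
  ∀ s : 𝒮, F s ∈ range (s : U →ₗ[K] V)

theorem IsRangeCompatible.dual_apply_eq_zero {F : 𝒮 → V} (hF : IsRangeCompatible F) {ψ : Dual K V}
    {s : 𝒮} (hs : ψ ∘ₗ (s : U →ₗ[K] V) = 0) : ψ (F s) = 0 :=
  range_le_ker_iff.2 hs (hF s)

variable [Nonempty 𝒮]

theorem IsRangeCompatible.dual_linear_apply_eq_zero {F : 𝒮 →ᵃ[K] V} (hF : IsRangeCompatible F)
    {ψ : Dual K V} {s : 𝒮} (hs : ψ ∘ₗ (s : U →ₗ[K] V) = 0) {t : 𝒮.direction}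
    (ht : ψ ∘ₗ (t : U →ₗ[K] V) = 0) : ψ (F.linear t) = 0 := by
  have hts : ψ ∘ₗ ((t +ᵥ s : 𝒮) : U →ₗ[K] V) = 0 := by
    rw [AffineSubspace.coe_vadd, vadd_eq_add, comp_add, ht, hs, add_zero]
  have hFts := hF.dual_apply_eq_zero hts
  rwa [F.map_vadd, vadd_eq_add, map_add, hF.dual_apply_eq_zero hs, add_zero] at hFts

variable [FiniteDimensional K U]

theorem exists_comp_eq_zero_of_mem_rankOneKernel {d : V}
    (hd : d ∈ rankOneKernel (traceOrthogonal 𝒮.direction)) {ψ : Dual K V} (hψ : ψ d ≠ 0) :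
    ∃ s : 𝒮, ψ ∘ₗ (s : U →ₗ[K] V) = 0 := by
  obtain ⟨s₀⟩ := ‹Nonempty 𝒮›
  obtain ⟨r, hr, hψr⟩ := exists_mem_comp_eq_of_mem_rankOneKernel hd hψ (-(ψ ∘ₗ (s₀ : U →ₗ[K] V)))
  refine ⟨(⟨r, hr⟩ : 𝒮.direction) +ᵥ s₀, ?_⟩
  rw [AffineSubspace.coe_vadd, vadd_eq_add, comp_add, hψr, neg_add_cancel]

theorem IsRangeCompatible.linear_apply_mem_range {F : 𝒮 →ᵃ[K] V} (hF : IsRangeCompatible F)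
    {t : 𝒮.direction}
    (ht : ¬ rankOneKernel (traceOrthogonal 𝒮.direction) ≤ range (t : U →ₗ[K] V)) :
    F.linear t ∈ range (t : U →ₗ[K] V) := by
  obtain ⟨d, hd, hdt⟩ := SetLike.not_le_iff_exists.1 ht
  refine mem_of_forall_dual_apply_eq_zero hdt fun ψ hψt hψd ↦ ?_
  obtain ⟨s, hs⟩ := exists_comp_eq_zero_of_mem_rankOneKernel hd hψd
  exact hF.dual_linear_apply_eq_zero hs (range_le_ker_iff.1 hψt)

end RangeCompatible

theorem linear_part_rank_one_lemma_general [FiniteDimensional K U] [FiniteDimensional K V]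
    (𝒮 : AffineSubspace K (U →ₗ[K] V)) [Nonempty 𝒮] (F : 𝒮 →ᵃ[K] V) (hF : IsRangeCompatible F) :
    (∀ D ≤ rankOneKernel (traceOrthogonal 𝒮.direction), ∀ t : 𝒮.direction,
      ¬ D ≤ range (t : U →ₗ[K] V) → F.linear t ∈ range (t : U →ₗ[K] V)) ∧
    (∀ k : ℕ, finrank K (U →ₗ[K] V) + k ≤ finrank K 𝒮.direction + finrank K V →
      ∃ D ≤ rankOneKernel (traceOrthogonal 𝒮.direction), finrank K D = k) ∧
    (∀ t : 𝒮.direction,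
      finrank K (U →ₗ[K] V) + finrank K (range (t : U →ₗ[K] V)) <
        finrank K 𝒮.direction + finrank K V →
      F.linear t ∈ range (t : U →ₗ[K] V)) := by
  have hdim := finrank_add_finrank_le_finrank_rankOneKernel_add 𝒮.direction
  refine ⟨fun D hD t ht ↦ hF.linear_apply_mem_range fun hle ↦ ht (hD.trans hle),
    fun k hk ↦ exists_le_finrank_eq (by omega), fun t ht ↦ hF.linear_apply_mem_range fun hle ↦ ?_⟩
  have hrank := Submodule.finrank_mono hle
  omega

end OperatorSpaces

/-- Let `𝒮` be an affine subspace of `L(U,V)` with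
`codim 𝒮 ≤ dim V − 1`, `F : 𝒮 → V` a range-compatible affine map, `S` the translation
vector space (direction) of `𝒮` and `F⃗` the linear part of `F`. Here
`t ∈ S⊥` is expressed by `∀ s ∈ 𝒮.direction, tr (t ∘ s) = 0`. Then:
(a) for every 1-dimensional subspace `D` of `V` contained in the kernel of every rank-1
operator of `S⊥`, and every rank-1 operator `t ∈ S` with `range t ≠ D`, one has
`F⃗ t ∈ range t`;
(b) there exists a 1-dimensional subspace `D` of `V` contained in the kernel of every
rank-1 operator of `S⊥`;
(c) if `codim 𝒮 < dim V − 1` then `F⃗ t ∈ range t` for every rank-1 operator `t ∈ S`. -/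
theorem linear_part_rank_one_lemma
    (K U V : Type*) [Field K]
    [AddCommGroup U] [Module K U] [FiniteDimensional K U]
    [AddCommGroup V] [Module K V] [FiniteDimensional K V]
    (𝒮 : AffineSubspace K (U →ₗ[K] V)) [Nonempty ↥𝒮]
    (hcodim : Module.finrank K (U →ₗ[K] V) + 1 ≤
      Module.finrank K 𝒮.direction + Module.finrank K V)
    (F : ↥𝒮 →ᵃ[K] V)
    (hrc : ∀ s : ↥𝒮, F s ∈ LinearMap.range (s : U →ₗ[K] V)) :
    (∀ D : Submodule K V, Module.finrank K D = 1 →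
      (∀ t : V →ₗ[K] U,
        (∀ s ∈ 𝒮.direction, LinearMap.trace K U (t ∘ₗ s) = 0) →
        Module.finrank K (LinearMap.range t) = 1 → D ≤ LinearMap.ker t) →
      ∀ t : ↥𝒮.direction,
        Module.finrank K (LinearMap.range (t : U →ₗ[K] V)) = 1 →
        LinearMap.range (t : U →ₗ[K] V) ≠ D →
        F.linear t ∈ LinearMap.range (t : U →ₗ[K] V)) ∧
    (∃ D : Submodule K V, Module.finrank K D = 1 ∧
      ∀ t : V →ₗ[K] U,
        (∀ s ∈ 𝒮.direction, LinearMap.trace K U (t ∘ₗ s) = 0) →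
        Module.finrank K (LinearMap.range t) = 1 → D ≤ LinearMap.ker t) ∧
    (Module.finrank K (U →ₗ[K] V) + 1 <
        Module.finrank K 𝒮.direction + Module.finrank K V →
      ∀ t : ↥𝒮.direction,
        Module.finrank K (LinearMap.range (t : U →ₗ[K] V)) = 1 →
        F.linear t ∈ LinearMap.range (t : U →ₗ[K] V)) := by
  obtain ⟨mem_range, exists_le, mem_range_of_lt⟩ := linear_part_rank_one_lemma_general 𝒮 F hrc
  simp only [le_rankOneKernel_iff, mem_traceOrthogonal_iff] at mem_range exists_le
  refine ⟨fun D hD hDker t ht hne ↦ mem_range D hDker t fun hle ↦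
    hne (Submodule.eq_of_le_of_finrank_eq hle (hD.trans ht.symm)).symm, ?_,
    fun hlt t ht ↦ mem_range_of_lt t (ht.symm ▸ hlt)⟩
  obtain ⟨D, hDker, hD⟩ := exists_le 1 hcodim
  exact ⟨D, hD, hDker⟩
end

section
/- Let U and V be finite-dimensional vector spaces over a field K and S a linear subspace of L(U,V). Assume codim S ≤ dim V − 2, and codim S ≤ dim V − 3 if K has exactly 2 elements. Then every quasi-range-compatible additive group homomorphism F : S → V is local. -/
/-!
Write `u ⊗ w` for the map `t ↦ u t • w`. If `S = L(U, V)`, the additive maps `w ↦ F (u ⊗ w)`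
preserve every line of `V` except possibly one, which forces them to be homotheties; the ratio is
linear in `u`, hence evaluation at a point of `U`.

For a proper subspace `S`, one argues by induction on its codimension. If some rank one map with
range `K ∙ y` is missing from `S`, then composing `S` with the projection `V → V ⧸ K ∙ y` lowers the
codimension, so `F` is local modulo `y` provided that `K ∙ y` is not the exceptional line. Two such
lines `K ∙ y` and `K ∙ z` yield points `x₁` and `x₂` of `U`. If they differ, then `s (x₁ - x₂) ∈
span {y, z}` for all `s ∈ S`; by codimension `S` consists of all such maps, so it contains every map
with range in `K ∙ y`. Hence `x₁ = x₂`, and `F` is local because the two lines meet in `0`.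
-/

open Module Submodule

section Lines

theorem exists_notMem_notMem {R M : Type*} [Ring R] [AddCommGroup M] [Module R M]
    {P Q : Submodule R M} (hP : P ≠ ⊤) (hQ : Q ≠ ⊤) : ∃ v, v ∉ P ∧ v ∉ Q := by
  by_contra! h
  have hcover : ((⊤ : Submodule R M) : Set M) ⊆ P ∪ Q := fun v _ =>
    or_iff_not_imp_left.2 (h v)
  exact (AddSubgroupClass.subset_union.1 hcover).elim (hP ∘ top_le_iff.1) (hQ ∘ top_le_iff.1)

variable {K V : Type*} [DivisionRing K] [AddCommGroup V] [Module K V]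

theorem notMem_span_singleton_symm {v w : V} (hv : v ≠ 0) (hw : w ∉ K ∙ v) : v ∉ K ∙ w :=
  (disjoint_span_singleton' hv).1 (disjoint_span_singleton_of_notMem hw).symm

theorem finrank_span_pair_le (v w : V) : finrank K (span K {v, w}) ≤ 2 := by
  classical
  have hcard := (finrank_span_finset_le_card (R := K) {v, w}).trans Finset.card_le_two
  rwa [Finset.coe_pair] at hcard

theorem span_pair_ne_top_of_two_lt_finrank (hV : 2 < finrank K V) (v w : V) :
    span K {v, w} ≠ ⊤ :=
  (lt_top_of_finrank_lt_finrank ((finrank_span_pair_le v w).trans_lt hV)).ne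

theorem exists_disjoint_span_singleton_notMem (hV : 2 < finrank K V) {P : Submodule K V}
    (hP : P ≠ ⊤) (d : V) :
    ∃ y z, (y ∉ P ∧ y ∉ K ∙ d) ∧ (z ∉ P ∧ z ∉ K ∙ d) ∧ Disjoint (K ∙ y) (K ∙ z) := by
  have hline : K ∙ d ≠ ⊤ := (span_lt_top_of_card_lt_finrank (by simpa using by lia)).ne
  obtain ⟨y, hy⟩ := exists_notMem_notMem hP hline
  obtain ⟨z, hzP, hz⟩ := exists_notMem_notMem hP (span_pair_ne_top_of_two_lt_finrank hV d y)
  have hzd : z ∉ K ∙ d := fun h => hz (span_mono (by simp) h)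
  have hzy : z ∉ K ∙ y := fun h => hz (span_mono (by simp) h)
  exact ⟨y, z, hy, ⟨hzP, hzd⟩, disjoint_span_singleton_of_notMem hzy⟩

end Lines

section AdditiveMaps

variable {K V : Type*} [DivisionRing K] [AddCommGroup V] [Module K V] {g : V →+ V} {d : V}

theorem eq_of_linearIndependent_of_map_add_mem_span {v w : V} {a b : K}
    (hvw : LinearIndependent K ![v, w]) (hv : g v = a • v) (hw : g w = b • w)
    (hadd : g (v + w) ∈ K ∙ (v + w)) : a = b := by
  obtain ⟨c, hc⟩ := mem_span_singleton.1 hadd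
  rw [map_add, hv, hw, smul_add] at hc
  obtain ⟨rfl, rfl⟩ := hvw.eq_of_pair hc
  rfl

theorem exists_smul_of_forall_mem_span_singleton (hV : 1 < finrank K V)
    (hg : ∀ w, g w ∈ K ∙ w) : ∃ c : K, ∀ w, g w = c • w := by
  have : Nontrivial V := nontrivial_of_finrank_pos (R := K) (by lia)
  obtain ⟨y, hy⟩ := exists_ne (0 : V)
  obtain ⟨z, hyz⟩ := exists_linearIndependent_pair_of_one_lt_finrank hV hy
  obtain ⟨c, hc⟩ := mem_span_singleton.1 (hg y)
  have smul_of_notMem {w : V} (hw : w ∉ K ∙ y) : g w = c • w := by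
    obtain ⟨b, hb⟩ := mem_span_singleton.1 (hg w)
    have hyw : LinearIndependent K ![y, w] :=
      (LinearIndependent.pair_iff' hy).2 fun a ha => hw (mem_span_singleton.2 ⟨a, ha⟩)
    rw [eq_of_linearIndependent_of_map_add_mem_span hyw hc.symm hb.symm (hg _), hb]
  have hz : z ∉ K ∙ y := fun h =>
    let ⟨a, ha⟩ := mem_span_singleton.1 h
    (LinearIndependent.pair_iff' hy).1 hyz a ha
  refine ⟨c, fun w => ?_⟩
  by_cases hw : w ∈ K ∙ y
  · have hzw : z + w ∉ K ∙ y := fun h => hz ((Submodule.add_mem_iff_left _ hw).1 h)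
    have hsum := smul_of_notMem hzw
    rwa [map_add, smul_of_notMem hz, smul_add, add_right_inj] at hsum
  · exact smul_of_notMem hw

theorem exists_ne_zero_ne_one_of_card_ne_two (hK : Nat.card K ≠ 2) : ∃ μ : K, μ ≠ 0 ∧ μ ≠ 1 := by
  by_contra! h
  exact hK ((Nat.card_eq_two_iff' 0).2 ⟨1, one_ne_zero, h⟩)

theorem map_mem_span_singleton_of_two_lt_finrank (hV : 2 < finrank K V)
    (hg : ∀ w ∉ K ∙ d, g w ∈ K ∙ w) : g d ∈ K ∙ d := by
  obtain ⟨z, -, hz⟩ := SetLike.exists_of_lt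
    (span_pair_ne_top_of_two_lt_finrank (K := K) hV d (g d)).lt_top
  have hd : d ∈ span K {d, g d} := mem_span_of_mem (by simp)
  have hgd : g d ∈ span K {d, g d} := mem_span_of_mem (by simp)
  have hzd : z ∉ K ∙ d := fun h => hz (span_mono (by simp) h)
  have hdz : d + z ∉ K ∙ d := fun h =>
    hzd ((Submodule.add_mem_iff_right _ (mem_span_singleton_self d)).1 h)
  obtain ⟨b, hb⟩ := mem_span_singleton.1 (hg z hzd)
  obtain ⟨c, hc⟩ := mem_span_singleton.1 (hg (d + z) hdz)
  have hgd_eq : g d - c • d = (c - b) • z := by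
    rw [map_add, ← hb, smul_add] at hc
    rw [sub_smul, sub_eq_sub_iff_add_eq_add, ← hc, add_comm]
  have hcb : c - b = 0 := by
    by_contra hne
    exact hz ((smul_mem_iff _ hne).1 (hgd_eq ▸ sub_mem hgd (smul_mem _ c hd)))
  rw [hcb, zero_smul, sub_eq_zero] at hgd_eq
  exact hgd_eq ▸ smul_mem _ c (mem_span_singleton_self d)

theorem map_mem_span_singleton_of_card_ne_two (hK : Nat.card K ≠ 2)
    (hg : ∀ w ∉ K ∙ d, g w ∈ K ∙ w) : g d ∈ K ∙ d := by
  by_contra hy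
  set y := g d with hgd
  have hy0 : y ≠ 0 := fun h => hy (h ▸ zero_mem _)
  have hd0 : d ≠ 0 := by rintro rfl; exact hy0 (map_zero g)
  have hdy : LinearIndependent K ![d, y] :=
    (LinearIndependent.pair_iff' hd0).2 fun a ha => hy (mem_span_singleton.2 ⟨a, ha⟩)
  -- `g (d + ν • y) = y + g (ν • y)` lies on both `K ∙ y` and `K ∙ (d + ν • y)`.
  have map_smul_y {ν : K} (hν : ν ≠ 0) : g (ν • y) = -y := by
    have hνy : ν • y ∉ K ∙ d := fun h => hy ((smul_mem_iff _ hν).1 h)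
    have hdνy : d + ν • y ∉ K ∙ d := fun h =>
      hνy ((Submodule.add_mem_iff_right _ (mem_span_singleton_self d)).1 h)
    obtain ⟨b, hb⟩ := mem_span_singleton.1 (hg _ hνy)
    obtain ⟨c, hc⟩ := mem_span_singleton.1 (hg _ hdνy)
    have hcoeff : c • d + (c * ν) • y = (0 : K) • d + (1 + b * ν) • y := by
      rw [map_add, ← hgd, ← hb, smul_add, smul_smul, smul_smul] at hc
      rw [hc, zero_smul, zero_add, add_smul, one_smul]
    obtain ⟨rfl, hb1⟩ := hdy.eq_of_pair hcoeff
    rw [zero_mul, eq_comm, add_comm, add_eq_zero_iff_eq_neg] at hb1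
    rw [← hb, smul_smul, hb1, neg_one_smul]
  obtain ⟨μ, hμ0, hμ1⟩ := exists_ne_zero_ne_one_of_card_ne_two hK
  have hsum : -y = -y + -y := calc
    -y = g ((1 : K) • y) := (map_smul_y one_ne_zero).symm
    _ = g (μ • y) + g ((1 - μ) • y) := by rw [← map_add, ← add_smul, add_sub_cancel]
    _ = -y + -y := by rw [map_smul_y hμ0, map_smul_y (sub_ne_zero.2 hμ1.symm)]
  exact hy0 (neg_eq_zero.1 (left_eq_add.1 hsum))

theorem exists_smul_of_forall_notMem_span_singleton (hV : 1 < finrank K V)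
    (hK : Nat.card K = 2 → 2 < finrank K V) (hg : ∀ w ∉ K ∙ d, g w ∈ K ∙ w) :
    ∃ c : K, ∀ w, g w = c • w := by
  refine exists_smul_of_forall_mem_span_singleton hV fun w => ?_
  have hgw (h : K ∙ w = K ∙ d) : g w ∈ K ∙ w := by
    by_cases hcard : Nat.card K = 2
    · exact map_mem_span_singleton_of_two_lt_finrank (hK hcard) (h ▸ hg)
    · exact map_mem_span_singleton_of_card_ne_two hcard (h ▸ hg)
  by_cases hwd : w ∈ K ∙ d
  · obtain rfl | hw0 := eq_or_ne w 0
    · simp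
    · obtain ⟨a, rfl⟩ := mem_span_singleton.1 hwd
      exact hgw (span_singleton_smul_eq (IsUnit.mk0 a fun h => hw0 (by simp [h])) d)
  · exact hg w hwd

end AdditiveMaps

section Codimension

variable {K M N : Type*} [DivisionRing K] [AddCommGroup M] [Module K M] [AddCommGroup N]
  [Module K N] {f : M →ₗ[K] N}

theorem finrank_quotient_map_lt (hf : Function.Surjective f) {R : Submodule K M}
    [FiniteDimensional K (M ⧸ R)] (hR : ¬ f.ker ≤ R) :
    finrank K (N ⧸ R.map f) < finrank K (M ⧸ R) := by
  let φ : (M ⧸ R) →ₗ[K] (N ⧸ R.map f) := R.mapQ (R.map f) f (le_comap_map f R)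
  have hrange : φ.range = ⊤ := by
    rw [range_mapQ, LinearMap.range_eq_top.2 hf, Submodule.map_top, range_mkQ]
  have hker : φ.ker ≠ ⊥ := by
    obtain ⟨m, hm, hmR⟩ := SetLike.not_le_iff_exists.1 hR
    refine (Submodule.ne_bot_iff _).2 ⟨R.mkQ m, ?_, by simpa using hmR⟩
    simp [φ, LinearMap.mem_ker.1 hm]
  have hsum := φ.finrank_range_add_finrank_ker
  rw [hrange, finrank_top] at hsum
  have := one_le_finrank_iff.2 hker
  lia

theorem finrank_quotient_comap (hf : Function.Surjective f) (Q : Submodule K N) :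
    finrank K (M ⧸ Q.comap f) = finrank K (N ⧸ Q) := by
  have hker : (Q.mkQ ∘ₗ f).ker = Q.comap f := by rw [LinearMap.ker_comp, ker_mkQ]
  rw [← hker]
  exact ((Q.mkQ ∘ₗ f).quotKerEquivOfSurjective (Q.mkQ_surjective.comp hf)).finrank_eq

theorem eq_of_le_of_finrank_quotient_le [FiniteDimensional K M] {R T : Submodule K M}
    (hRT : R ≤ T) (h : finrank K (M ⧸ R) ≤ finrank K (M ⧸ T)) : R = T := by
  have hR := R.finrank_quotient_add_finrank
  have hT := T.finrank_quotient_add_finrank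
  exact eq_of_le_of_finrank_le hRT (by lia)

end Codimension

section LinearMaps

theorem sum_coord_smulRight {R M N ι : Type*} [CommSemiring R] [AddCommMonoid M] [Module R M]
    [AddCommMonoid N] [Module R N] [Fintype ι] (b : Basis ι R M) (s : M →ₗ[R] N) :
    ∑ i, (b.coord i).smulRight (s (b i)) = s := by
  classical
  refine b.ext fun j => ?_
  simp [LinearMap.sum_apply, Finsupp.single_apply]

variable {K U V : Type*} [Field K] [AddCommGroup U] [Module K U] [AddCommGroup V] [Module K V]

theorem exists_apply_of_forall_smulRight_eq_smul [FiniteDimensional K U] [Nontrivial V]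
    (G : (U →ₗ[K] V) →+ V) (hG : ∀ u : Dual K U, ∃ c : K, ∀ w, G (u.smulRight w) = c • w) :
    ∃ x : U, ∀ s, G s = s x := by
  choose c hc using hG
  obtain ⟨w, hw⟩ := exists_ne (0 : V)
  let φ : Dual K (Dual K U) :=
    { toFun := c
      map_add' u v := smul_left_injective K hw <| by
        have : (u + v).smulRight w = u.smulRight w + v.smulRight w := by ext; simp [add_smul]
        simp only [add_smul, ← hc, this, map_add]
      map_smul' a u := smul_left_injective K hw <| by
        have : (a • u).smulRight w = u.smulRight (a • w) := by
          ext; simp [smul_smul, mul_comm]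
        simp only [← hc, this]
        rw [hc, smul_smul, RingHom.id_apply, smul_eq_mul, mul_comm] }
  obtain ⟨x, hx⟩ := (evalEquiv K U).surjective φ
  have hcx (u : Dual K U) : c u = u x := (LinearMap.congr_fun hx u).symm
  refine ⟨x, fun s => ?_⟩
  rw [← sum_coord_smulRight (finBasis K U) s, map_sum, LinearMap.sum_apply]
  simp only [hc, hcx, LinearMap.smulRight_apply]

/-- The vectors `y` such that `R` contains every linear map `U → V` with range in `K ∙ y`.
Passing from `V` to `V ⧸ K ∙ y` lowers the codimension of `R` exactly when `y` is not one of
them. -/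
def absorbedVectors (R : Submodule K (U →ₗ[K] V)) : Submodule K V :=
  ⨅ u : Dual K U, R.comap (LinearMap.smulRightₗ u)

variable {R : Submodule K (U →ₗ[K] V)}

theorem mem_absorbedVectors {y : V} :
    y ∈ absorbedVectors R ↔ ∀ u : Dual K U, u.smulRight y ∈ R := by
  simp [absorbedVectors]

theorem absorbedVectors_ne_top [FiniteDimensional K U] (hR : R ≠ ⊤) : absorbedVectors R ≠ ⊤ := by
  refine fun htop => hR (eq_top_iff'.2 fun s => ?_)
  rw [← sum_coord_smulRight (finBasis K U) s]
  exact sum_mem fun i _ => mem_absorbedVectors.1 (htop ▸ mem_top) _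

theorem applyₗ_surjective {x : U} (hx : x ≠ 0) :
    Function.Surjective (LinearMap.applyₗ x : (U →ₗ[K] V) →ₗ[K] V) := fun w =>
  let ⟨u, hu⟩ := Projective.exists_dual_eq_one K hx
  ⟨u.smulRight w, by simp [hu]⟩

theorem le_absorbedVectors [FiniteDimensional K U] [FiniteDimensional K V] {x : U} (hx : x ≠ 0)
    {Q : Submodule K V} (hRQ : ∀ s ∈ R, s x ∈ Q)
    (hcodim : finrank K ((U →ₗ[K] V) ⧸ R) ≤ finrank K (V ⧸ Q)) : Q ≤ absorbedVectors R := by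
  have hR : R = Q.comap (LinearMap.applyₗ x) := eq_of_le_of_finrank_quotient_le hRQ
    (hcodim.trans_eq (finrank_quotient_comap (applyₗ_surjective hx) Q).symm)
  refine fun y hy => mem_absorbedVectors.2 fun u => ?_
  rw [hR]
  exact Q.smul_mem (u x) hy

theorem compRight_surjective {V' : Type*} [AddCommGroup V'] [Module K V'] {f : V →ₗ[K] V'}
    (hf : Function.Surjective f) :
    Function.Surjective (f.compRight K : (U →ₗ[K] V) →ₗ[K] (U →ₗ[K] V')) := fun t =>
  let ⟨g, hg⟩ := projective_lifting_property f t hf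
  ⟨g, hg⟩

theorem finrank_quotient_map_compRight_mkQ_lt [FiniteDimensional K U] [FiniteDimensional K V]
    {y : V} (hy : y ∉ absorbedVectors R) :
    finrank K ((U →ₗ[K] V ⧸ K ∙ y) ⧸ R.map ((K ∙ y).mkQ.compRight K)) <
      finrank K ((U →ₗ[K] V) ⧸ R) := by
  refine finrank_quotient_map_lt (compRight_surjective (mkQ_surjective _)) fun hker => ?_
  refine hy (mem_absorbedVectors.2 fun u => hker ?_)
  ext t
  simp

end LinearMaps

section QuasiRangeCompatible

variable {K A U V : Type*} [Field K] [AddCommGroup A] [Module K A]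
  [AddCommGroup U] [Module K U] [AddCommGroup V] [Module K V]

/-- Quasi-range-compatibility of `F` with respect to the line `K ∙ d`, for an operator space
presented as the image of a linear map `ρ` rather than as a subspace of `U →ₗ[K] V`: this way the
domain of `F` is unchanged when the operators are composed with a projection of `V`. -/
def IsQuasiRangeCompatible (ρ : A →ₗ[K] U →ₗ[K] V) (d : V) (F : A →+ V) : Prop :=
  ∀ a, d ∉ (ρ a).range → F a ∈ (ρ a).range

namespace IsQuasiRangeCompatible

variable {ρ : A →ₗ[K] U →ₗ[K] V} {d : V} {F : A →+ V}

theorem comp_left {V' : Type*} [AddCommGroup V'] [Module K V'] (hF : IsQuasiRangeCompatible ρ d F)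
    (f : V →ₗ[K] V') :
    IsQuasiRangeCompatible (f.compRight K ∘ₗ ρ) (f d) (f.toAddMonoidHom.comp F) := by
  intro a ha
  have hrange : ((f.compRight K ∘ₗ ρ) a).range = (ρ a).range.map f := LinearMap.range_comp (ρ a) f
  rw [hrange] at ha ⊢
  exact mem_map_of_mem (hF a fun hd => ha (mem_map_of_mem hd))

theorem comp_right {B : Type*} [AddCommGroup B] [Module K B] (hF : IsQuasiRangeCompatible ρ d F)
    (σ : B →ₗ[K] A) : IsQuasiRangeCompatible (ρ ∘ₗ σ) d (F.comp σ.toAddMonoidHom) :=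
  fun b => hF (σ b)

theorem map_eq_zero (hF : IsQuasiRangeCompatible ρ d F) (hd : d ≠ 0) {a : A} (ha : ρ a = 0) :
    F a = 0 := by
  simpa [ha, hd] using hF a

theorem map_smulRight_mem_span {G : (U →ₗ[K] V) →+ V}
    (hG : IsQuasiRangeCompatible LinearMap.id d G) (hd : d ≠ 0) (u : Dual K U) {w : V}
    (hw : w ∉ K ∙ d) : G (u.smulRight w) ∈ K ∙ w := by
  obtain rfl | hu := eq_or_ne u 0
  · simp
  have hrange := LinearMap.range_smulRight_apply hu w
  exact hrange ▸ hG (u.smulRight w) (hrange ▸ notMem_span_singleton_symm hd hw)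

theorem exists_apply_of_id [FiniteDimensional K U] {G : (U →ₗ[K] V) →+ V}
    (hG : IsQuasiRangeCompatible LinearMap.id d G) (hd : d ≠ 0) (hV : 1 < finrank K V)
    (hK : Nat.card K = 2 → 2 < finrank K V) : ∃ x : U, ∀ s, G s = s x := by
  have : Nontrivial V := ⟨d, 0, hd⟩
  refine exists_apply_of_forall_smulRight_eq_smul G fun u => ?_
  exact exists_smul_of_forall_notMem_span_singleton
    (g := G.comp (LinearMap.smulRightₗ u).toAddMonoidHom) hV hK
    fun w hw => hG.map_smulRight_mem_span hd u hw

theorem exists_apply_of_range_eq_top [FiniteDimensional K U] (hF : IsQuasiRangeCompatible ρ d F)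
    (hd : d ≠ 0) (hρ : ρ.range = ⊤) (hV : 1 < finrank K V)
    (hK : Nat.card K = 2 → 2 < finrank K V) : ∃ x : U, ∀ a, F a = ρ a x := by
  obtain ⟨σ, hσ⟩ := ρ.exists_rightInverse_of_surjective hρ
  obtain ⟨x, hx⟩ := (hσ ▸ hF.comp_right σ).exists_apply_of_id hd hV hK
  refine ⟨x, fun a => ?_⟩
  have hker : ρ (a - σ (ρ a)) = 0 := by
    rw [map_sub, sub_eq_zero]
    exact (LinearMap.congr_fun hσ (ρ a)).symm
  calc F a = F (σ (ρ a)) := by rw [← sub_eq_zero, ← map_sub, hF.map_eq_zero hd hker]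
    _ = ρ a x := hx (ρ a)

end IsQuasiRangeCompatible

theorem exists_apply_of_local_mod_two_lines [FiniteDimensional K U] [FiniteDimensional K V]
    {ρ : A →ₗ[K] U →ₗ[K] V} {F : A → V} {y z : V} {x₁ x₂ : U}
    (hcodim : finrank K ((U →ₗ[K] V) ⧸ ρ.range) + 2 ≤ finrank K V)
    (hy : y ∉ absorbedVectors ρ.range) (hyz : Disjoint (K ∙ y) (K ∙ z))
    (h₁ : ∀ a, F a - ρ a x₁ ∈ K ∙ y) (h₂ : ∀ a, F a - ρ a x₂ ∈ K ∙ z) :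
    ∃ x : U, ∀ a, F a = ρ a x := by
  suffices hx : x₁ = x₂ from ⟨x₁, fun a => sub_eq_zero.1 (disjoint_def.1 hyz _ (h₁ a) (hx ▸ h₂ a))⟩
  by_contra hne
  have hrange : ∀ s ∈ ρ.range, s (x₂ - x₁) ∈ span K {y, z} := by
    rintro _ ⟨a, rfl⟩
    have hdiff : ρ a (x₂ - x₁) = (F a - ρ a x₁) - (F a - ρ a x₂) := by
      rw [map_sub, sub_sub_sub_cancel_left]
    rw [hdiff, span_insert]
    exact sub_mem (mem_sup_left (h₁ a)) (mem_sup_right (h₂ a))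
  have hle := finrank_span_pair_le (K := K) y z
  have hquot := (span K {y, z}).finrank_quotient_add_finrank
  exact hy (le_absorbedVectors (sub_ne_zero.2 (Ne.symm hne)) hrange (by lia)
    (mem_span_of_mem (by simp)))

theorem IsQuasiRangeCompatible.exists_apply [FiniteDimensional K U] [FiniteDimensional K V]
    {ρ : A →ₗ[K] U →ₗ[K] V} {d : V} {F : A →+ V} (hF : IsQuasiRangeCompatible ρ d F) (hd : d ≠ 0)
    (hcodim : finrank K ((U →ₗ[K] V) ⧸ ρ.range) + 2 ≤ finrank K V)
    (hcodim_two : Nat.card K = 2 → finrank K ((U →ₗ[K] V) ⧸ ρ.range) + 3 ≤ finrank K V) :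
    ∃ x : U, ∀ a, F a = ρ a x := by
  induction hm : finrank K ((U →ₗ[K] V) ⧸ ρ.range) using Nat.strong_induction_on
    generalizing V with | _ m ih
  by_cases hρ : ρ.range = ⊤
  · exact hF.exists_apply_of_range_eq_top hd hρ (by lia) (by lia)
  have local_mod_line {y : V} (hy : y ∉ absorbedVectors ρ.range) (hyd : y ∉ K ∙ d) :
      ∃ x : U, ∀ a, F a - ρ a x ∈ K ∙ y := by
    have hdrop := finrank_quotient_map_compRight_mkQ_lt hy
    rw [← LinearMap.range_comp] at hdrop
    have hdim : finrank K (V ⧸ K ∙ y) + 1 = finrank K V := by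
      rw [← finrank_quotient_add_finrank (K ∙ y),
        finrank_span_singleton (ne_of_mem_of_not_mem (zero_mem _) hy).symm]
    have hdy : (K ∙ y).mkQ d ≠ 0 := by simpa using notMem_span_singleton_symm hd hyd
    obtain ⟨x, hx⟩ := ih _ (hm ▸ hdrop) (hF.comp_left (K ∙ y).mkQ) hdy (by lia) (by lia) rfl
    exact ⟨x, fun a => (Submodule.Quotient.eq _).1 (hx a)⟩
  have hV : 2 < finrank K V := by
    have hpos : 0 < finrank K ((U →ₗ[K] V) ⧸ ρ.range) :=
      have := Submodule.Quotient.nontrivial_iff.2 hρ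
      finrank_pos
    lia
  obtain ⟨y, z, ⟨hyW, hyd⟩, ⟨hzW, hzd⟩, hyz⟩ :=
    exists_disjoint_span_singleton_notMem hV (absorbedVectors_ne_top hρ) d
  obtain ⟨x₁, hx₁⟩ := local_mod_line hyW hyd
  obtain ⟨x₂, hx₂⟩ := local_mod_line hzW hzd
  exact exists_apply_of_local_mod_two_lines hcodim hyW hyz hx₁ hx₂

end QuasiRangeCompatible

/-- Let `U` and `V` be finite-dimensional vector spaces over a field `K`
and `S` a linear subspace of `L(U,V)`. Assume `codim S ≤ dim V − 2`, and
`codim S ≤ dim V − 3` if `K` has exactly 2 elements. Then every quasi-range-compatible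
additive group homomorphism `F : S → V` is local. -/
theorem quasi_range_compatible_hom_is_local
    (K U V : Type*) [Field K]
    [AddCommGroup U] [Module K U] [FiniteDimensional K U]
    [AddCommGroup V] [Module K V] [FiniteDimensional K V]
    (S : Submodule K (U →ₗ[K] V))
    (h1 : Module.finrank K (U →ₗ[K] V) + 2 ≤
      Module.finrank K S + Module.finrank K V)
    (h2 : Nat.card K = 2 → Module.finrank K (U →ₗ[K] V) + 3 ≤
      Module.finrank K S + Module.finrank K V)
    (F : ↥S →+ V)
    (hq : ∃ D : Submodule K V, Module.finrank K D = 1 ∧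
      ∀ s : ↥S, ¬ D ≤ LinearMap.range (s : U →ₗ[K] V) →
        F s ∈ LinearMap.range (s : U →ₗ[K] V)) :
    ∃ x : U, ∀ s : ↥S, F s = (s : U →ₗ[K] V) x := by
  obtain ⟨D, hD, hF⟩ := hq
  obtain ⟨⟨d, hdD⟩, hd, -⟩ := finrank_eq_one_iff'.1 hD
  have hqrc : IsQuasiRangeCompatible S.subtype d F := fun s hs => hF s fun hDs => hs (hDs hdD)
  have hcodim := S.finrank_quotient_add_finrank
  exact hqrc.exists_apply (by simpa using hd) (by rw [range_subtype]; lia)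
    (by rw [range_subtype]; lia)
end

section
/- Let U and V be finite-dimensional vector spaces over the field K with exactly 2 elements, and S a linear subspace of L(U,V) with codim S ≤ 2·dim V − 5. Assume there is a vector x ∈ U with dim Sx = 2, where Sx = {s(x) : s ∈ S}, and let F : S → V be an additive group homomorphism that is non-local and quasi-range-compatible with respect to some 1-dimensional linear subspace D of V. Then (a) D ⊆ Sx, and (b) F is the sum of a local map and a map of the form s ↦ φ(s(x)), where φ is a K-linear idempotent endomorphism of Sx of rank 1 whose kernel and image both differ from D. -/
/-!
Over any field, a quasi-range-compatible linear map on an operator space of codimension at most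
`dim V - 3` is local. On `L(U,V)` itself this is seen on the rank-one operators `g ⊗ w`. A proper
subspace `S` of `L(U,V)` misses some rank-one operator with range `K ∙ v` for every `v` outside a
proper subspace of `V`; passing to `V ⧸ K ∙ v` for such a `v` lowers the codimension as well as the
dimension of `V`, so by induction `F` is local modulo two distinct lines, and the codimension of
`S` forces the two evaluation vectors to agree.

If `codim S ≤ 2 dim V - 5` and `dim Sx = 2`, the operators of `S` vanishing at `x` form a subspace
of `L(U ⧸ K ∙ x, V)` of codimension at most `dim V - 3`. Hence `F s = s y + φ (s x)` for some `y`
and `φ`. A dimension count shows that each `p ∈ Sx` with `D ≠ K ∙ p` is the value at `x` of some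
`s ∈ S` whose range avoids prescribed vectors outside `K ∙ p`, so `p` is an eigenvector of `φ`. As
`F` is not local, `φ` is not scalar on the plane `Sx`; a non-scalar map with at most one
non-eigenline `D` exists only over the field with two elements, where subtracting an eigenvalue
turns it into a projection.
-/

open Module

section LinearAlgebra

variable {K A B C : Type*} [Field K] [AddCommGroup A] [Module K A] [AddCommGroup B] [Module K B]
  [AddCommGroup C] [Module K C]

theorem natCard_eq_two_iff_forall_eq_zero_or_eq_one :
    Nat.card K = 2 ↔ ∀ c : K, c = 0 ∨ c = 1 := by
  rw [Nat.card_eq_two_iff' (0 : K)]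
  constructor
  · rintro ⟨a, -, ha⟩ c
    exact or_iff_not_imp_left.2 fun hc => (ha c hc).trans (ha 1 one_ne_zero).symm
  · exact fun h => ⟨1, one_ne_zero, fun c hc => (h c).resolve_left hc⟩

theorem exists_linearMap_eq_of_natCard_eq_two (hK : Nat.card K = 2) (F : A →+ B) :
    ∃ L : A →ₗ[K] B, ∀ a, L a = F a := by
  refine ⟨{ F with map_smul' := fun c a => ?_ }, fun a => rfl⟩
  rcases natCard_eq_two_iff_forall_eq_zero_or_eq_one.1 hK c with rfl | rfl <;> simp

theorem exists_comp_eq_of_ker_le_ker (p : A →ₗ[K] B) (G : A →ₗ[K] C)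
    (h : LinearMap.ker p ≤ LinearMap.ker G) : ∃ φ : B →ₗ[K] C, φ ∘ₗ p = G := by
  have hinj : LinearMap.ker ((LinearMap.ker p).liftQ p le_rfl) = ⊥ :=
    Submodule.ker_liftQ_eq_bot _ _ _ le_rfl
  obtain ⟨φ, hφ⟩ := IsSemisimpleModule.extension_property _ (LinearMap.ker_eq_bot.1 hinj)
    ((LinearMap.ker p).liftQ G h)
  refine ⟨φ, ?_⟩
  rw [← Submodule.liftQ_mkQ _ p le_rfl, ← LinearMap.comp_assoc, hφ, Submodule.liftQ_mkQ]

theorem exists_notMem_and_notMem {M N : Submodule K A} (hM : M ≠ ⊤) (hN : N ≠ ⊤) :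
    ∃ a, a ∉ M ∧ a ∉ N := by
  obtain ⟨a, -, ha⟩ := SetLike.exists_of_lt hM.lt_top
  obtain ⟨b, -, hb⟩ := SetLike.exists_of_lt hN.lt_top
  by_cases haN : a ∈ N
  · by_cases hbM : b ∈ M
    · exact ⟨a + b, fun h => ha ((M.add_mem_iff_left hbM).1 h),
        fun h => hb ((N.add_mem_iff_right haN).1 h)⟩
    · exact ⟨b, hbM, hb⟩
  · exact ⟨a, ha, haN⟩

theorem eq_zero_of_forall_notMem_apply_eq_zero {M : Submodule K A} (hM : M ≠ ⊤) {f : A →ₗ[K] B}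
    (h : ∀ a ∉ M, f a = 0) : f = 0 := by
  by_contra hf
  obtain ⟨a, haM, hfa⟩ := exists_notMem_and_notMem hM (mt LinearMap.ker_eq_top.1 hf)
  exact hfa (h a haM)

theorem exists_dual_le_ker_and_apply_ne_zero {M : Submodule K A} {a b : A} (ha : a ∉ M)
    (hb : b ∉ M) : ∃ f : Dual K A, M ≤ LinearMap.ker f ∧ f a ≠ 0 ∧ f b ≠ 0 := by
  obtain ⟨f, hfa, hf⟩ := Submodule.exists_le_ker_of_notMem ha
  obtain ⟨g, hgb, hg⟩ := Submodule.exists_le_ker_of_notMem hb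
  by_cases hfb : f b = 0
  · by_cases hga : g a = 0
    · exact ⟨f + g, fun r hr => by simp [LinearMap.mem_ker.1 (hf hr), LinearMap.mem_ker.1 (hg hr)],
        by simpa [hga] using hfa, by simpa [hfb] using hgb⟩
    · exact ⟨g, hg, hga, hgb⟩
  · exact ⟨f, hf, hfa, hfb⟩

theorem mem_span_singleton_symm {a b : A} (hb : b ≠ 0) (h : b ∈ K ∙ a) : a ∈ K ∙ b := by
  obtain ⟨c, rfl⟩ := Submodule.mem_span_singleton.1 h
  have hc : c ≠ 0 := left_ne_zero_of_smul hb
  exact Submodule.mem_span_singleton.2 ⟨c⁻¹, inv_smul_smul₀ hc a⟩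

theorem finrank_span_pair_le_two (a b : A) : finrank K (Submodule.span K {a, b}) ≤ 2 := by
  classical
  have h := (finrank_span_finset_le_card (R := K) {a, b}).trans Finset.card_le_two
  rwa [Finset.coe_pair] at h

theorem not_le_span_singleton_of_notMem {D : Submodule K A} {d w : A} (hdD : d ∈ D) (hd : d ≠ 0)
    (hw : w ∉ K ∙ d) : ¬ D ≤ K ∙ w :=
  fun h => hw (mem_span_singleton_symm hd (h hdD))

theorem span_pair_ne_top (hV : 3 ≤ finrank K A) (v w : A) : Submodule.span K {v, w} ≠ ⊤ := by
  intro h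
  have hle := finrank_span_pair_le_two (K := K) v w
  rw [h, finrank_top] at hle
  lia

theorem finrank_map_add_finrank_inf_ker [FiniteDimensional K A] (f : A →ₗ[K] B)
    (S : Submodule K A) :
    finrank K (S.map f) + finrank K ↥(S ⊓ LinearMap.ker f) = finrank K S := by
  have h := (f.domRestrict S).finrank_range_add_finrank_ker
  rwa [LinearMap.range_domRestrict, LinearMap.ker_domRestrict,
    ← Submodule.finrank_map_subtype_eq, Submodule.map_comap_subtype] at h

theorem finrank_add_finrank_lt_of_not_ker_le [FiniteDimensional K A] {f : A →ₗ[K] B}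
    (hf : Function.Surjective f) {S : Submodule K A} (hS : ¬ LinearMap.ker f ≤ S) :
    finrank K B + finrank K S < finrank K A + finrank K (S.map f) := by
  have hlt : finrank K ↥(S ⊓ LinearMap.ker f) < finrank K (LinearMap.ker f) :=
    Submodule.finrank_lt_finrank_of_lt (inf_lt_right.2 hS)
  have hS := finrank_map_add_finrank_inf_ker f S
  have hA := f.finrank_range_add_finrank_ker
  rw [LinearMap.range_eq_top.2 hf, finrank_top] at hA
  lia

end LinearAlgebra

section OperatorSpaces

variable {K U V : Type*} [Field K] [AddCommGroup U] [Module K U]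
  [AddCommGroup V] [Module K V]

/-- The vectors `v` such that `S` contains every operator with range in the line `K ∙ v`. -/
def rankOneDirections (S : Submodule K (U →ₗ[K] V)) : Submodule K V :=
  ⨅ g : Dual K U, S.comap (LinearMap.smulRightₗ g)

theorem mem_rankOneDirections {S : Submodule K (U →ₗ[K] V)} {v : V} :
    v ∈ rankOneDirections S ↔ ∀ g : Dual K U, g.smulRight v ∈ S := by
  simp [rankOneDirections, Submodule.mem_iInf]

variable [FiniteDimensional K U]

theorem span_range_smulRight_eq_top :
    Submodule.span K (Set.range fun p : Dual K U × V => p.1.smulRight p.2) = ⊤ := by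
  refine eq_top_iff.2 fun s _ => ?_
  let b := Module.finBasis K U
  have hs : s = ∑ i, (b.coord i).smulRight (s (b i)) :=
    b.ext fun j => by simp [LinearMap.sum_apply, Finsupp.single_apply]
  rw [hs]
  exact Submodule.sum_mem _ fun i _ => Submodule.subset_span ⟨(b.coord i, s (b i)), rfl⟩

theorem rankOneDirections_ne_top {S : Submodule K (U →ₗ[K] V)} (hS : S ≠ ⊤) :
    rankOneDirections S ≠ ⊤ := by
  contrapose! hS
  rw [eq_top_iff, ← span_range_smulRight_eq_top, Submodule.span_le]
  rintro _ ⟨⟨g, v⟩, rfl⟩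
  exact mem_rankOneDirections.1 (hS ▸ Submodule.mem_top) g

theorem linearIndependent_dual_comp_applyₗ {ι : Type*} {f : ι → Dual K V}
    (hf : LinearIndependent K f) {u : ι → U} (hu : ∀ i, u i ≠ 0) :
    LinearIndependent K fun i => f i ∘ₗ (LinearMap.applyₗ (u i) : (U →ₗ[K] V) →ₗ[K] V) := by
  rw [linearIndependent_iff'] at hf ⊢
  intro I c hc i hi
  obtain ⟨g, hg⟩ : ∃ g : Dual K U, g (u i) ≠ 0 := by
    by_contra! h
    exact hu i ((Module.forall_dual_apply_eq_zero_iff K _).1 h)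
  -- Evaluating the relation at the operators `g ⊗ v` gives a relation between the `f j`.
  have hrel : ∑ j ∈ I, (c j * g (u j)) • f j = 0 := by
    ext v
    simpa [mul_assoc] using LinearMap.congr_fun hc (g.smulRight v)
  exact (mul_eq_zero.1 (hf I _ hrel i hi)).resolve_right hg

variable [FiniteDimensional K V]

theorem finrank_span_add_finrank_le (S : Submodule K (U →ₗ[K] V)) (A : Set (Dual K V))
    (h : ∀ f ∈ A, ∃ u : U, u ≠ 0 ∧ ∀ s ∈ S, f (s u) = 0) :
    finrank K (Submodule.span K A) + finrank K S ≤ finrank K (U →ₗ[K] V) := by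
  obtain ⟨b, hbA, hspan, hli⟩ := exists_linearIndependent K A
  have : Fintype b := hli.setFinite.fintype
  choose u hu0 hu using fun f : b => h f (hbA f.2)
  have hle : Submodule.span K (Set.range fun f : b => (f : Dual K V) ∘ₗ LinearMap.applyₗ (u f)) ≤
      S.dualAnnihilator := by
    rw [Submodule.span_le]
    rintro _ ⟨f, rfl⟩
    exact (Submodule.mem_dualAnnihilator _).2 (hu f)
  calc finrank K (Submodule.span K A) + finrank K S
      = Fintype.card b + finrank K S := by
        rw [← hspan, ← finrank_span_eq_card hli, Subtype.range_coe]
    _ ≤ finrank K S.dualAnnihilator + finrank K S := by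
        rw [← finrank_span_eq_card (linearIndependent_dual_comp_applyₗ hli hu0)]
        gcongr
        exact Submodule.finrank_mono hle
    _ = finrank K (U →ₗ[K] V) := by
        rw [add_comm, Subspace.finrank_add_finrank_dualAnnihilator_eq]

theorem finrank_add_finrank_le_of_forall_apply_mem {S : Submodule K (U →ₗ[K] V)} {u : U}
    (hu : u ≠ 0) {E : Submodule K V} (h : ∀ s ∈ S, s u ∈ E) :
    finrank K S + finrank K V ≤ finrank K (U →ₗ[K] V) + finrank K E := by
  have hS := finrank_span_add_finrank_le S E.dualAnnihilator fun f hf =>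
    ⟨u, hu, fun s hs => (Submodule.mem_dualAnnihilator f).1 hf _ (h s hs)⟩
  have hE := Subspace.finrank_add_finrank_dualAnnihilator_eq E
  rw [Submodule.span_eq] at hS
  lia

end OperatorSpaces

section QuasiRangeCompatible

variable {K U V : Type*} [Field K] [AddCommGroup U] [Module K U] [AddCommGroup V] [Module K V]
  {S : Submodule K (U →ₗ[K] V)} {F : S →ₗ[K] V} {D : Submodule K V}

/-- `F` is local: it is the evaluation at some vector of `U`. -/
def IsLocalMap (F : S →ₗ[K] V) : Prop :=
  ∃ u : U, ∀ s : S, F s = (s : U →ₗ[K] V) u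

/-- `F` is quasi-range-compatible with respect to `D`. The subspace `D` may have any dimension;
enlarging it strengthens the condition. -/
def QuasiRangeCompatible (D : Submodule K V) (F : S →ₗ[K] V) : Prop :=
  ∀ s : S, ¬ D ≤ LinearMap.range (s : U →ₗ[K] V) → F s ∈ LinearMap.range (s : U →ₗ[K] V)

/-- The operator space `S mod W`, consisting of the operators `U → V ⧸ W` induced by those of
`S`. -/
def codomainQuotient (S : Submodule K (U →ₗ[K] V)) (W : Submodule K V) :
    Submodule K (U →ₗ[K] V ⧸ W) :=
  S.map (LinearMap.compRight K W.mkQ)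

/-- The space of operators in `S` that vanish on `W`, seen as operators `U ⧸ W → V`. -/
def domainQuotient (S : Submodule K (U →ₗ[K] V)) (W : Submodule K U) :
    Submodule K (U ⧸ W →ₗ[K] V) :=
  S.comap (LinearMap.lcomp K V W.mkQ)

theorem mkQ_comp_mem_codomainQuotient (W : Submodule K V) (s : S) :
    W.mkQ ∘ₗ (s : U →ₗ[K] V) ∈ codomainQuotient S W :=
  ⟨s, s.2, rfl⟩

theorem QuasiRangeCompatible.exists_codomainQuotient (hF : QuasiRangeCompatible D F)
    {W : Submodule K V} (hDW : ¬ D ≤ W) :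
    ∃ F' : codomainQuotient S W →ₗ[K] V ⧸ W, QuasiRangeCompatible (D.map W.mkQ) F' ∧
      ∀ s : S, F' ⟨_, mkQ_comp_mem_codomainQuotient W s⟩ = W.mkQ (F s) := by
  have hker : LinearMap.ker ((LinearMap.compRight K W.mkQ).domRestrict S) ≤
      LinearMap.ker (W.mkQ ∘ₗ F) := by
    intro s hs
    have hrange : LinearMap.range (s : U →ₗ[K] V) ≤ W := by
      rintro _ ⟨u, rfl⟩
      exact (Submodule.Quotient.mk_eq_zero W).1 (LinearMap.congr_fun hs u)
    exact (Submodule.Quotient.mk_eq_zero W).2 (hrange (hF s fun h => hDW (h.trans hrange)))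
  obtain ⟨φ, hφ⟩ := exists_comp_eq_of_ker_le_ker _ _ hker
  have hφF : ∀ s : S, φ (W.mkQ ∘ₗ (s : U →ₗ[K] V)) = W.mkQ (F s) := LinearMap.congr_fun hφ
  refine ⟨φ.domRestrict _, ?_, hφF⟩
  rintro ⟨_, s, hs, rfl⟩ hDs
  change φ (W.mkQ ∘ₗ s) ∈ LinearMap.range (W.mkQ ∘ₗ s)
  change ¬ D.map W.mkQ ≤ LinearMap.range (W.mkQ ∘ₗ s) at hDs
  rw [LinearMap.range_comp] at hDs ⊢
  rw [hφF ⟨s, hs⟩]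
  exact Submodule.mem_map_of_mem (hF ⟨s, hs⟩ fun h => hDs (Submodule.map_mono h))

/-- The map that `F` induces on the operators of `S` vanishing on `W`. -/
def domainQuotientMap (F : S →ₗ[K] V) (W : Submodule K U) : domainQuotient S W →ₗ[K] V :=
  F ∘ₗ (LinearMap.lcomp K V W.mkQ).restrict fun _ ht => ht

theorem QuasiRangeCompatible.domainQuotientMap (hF : QuasiRangeCompatible D F)
    (W : Submodule K U) : QuasiRangeCompatible D (domainQuotientMap F W) := by
  intro t
  have hrange : LinearMap.range ((t : U ⧸ W →ₗ[K] V) ∘ₗ W.mkQ) =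
      LinearMap.range (t : U ⧸ W →ₗ[K] V) :=
    LinearMap.range_comp_of_range_eq_top _ W.range_mkQ
  rw [← hrange]
  exact hF ⟨(t : U ⧸ W →ₗ[K] V) ∘ₗ W.mkQ, t.2⟩

theorem exists_forall_eq_apply_of_isLocalMap_domainQuotientMap {W : Submodule K U}
    (h : IsLocalMap (domainQuotientMap F W)) :
    ∃ y : U, ∀ s : S, W ≤ LinearMap.ker (s : U →ₗ[K] V) → F s = (s : U →ₗ[K] V) y := by
  obtain ⟨u, hu⟩ := h
  obtain ⟨y, rfl⟩ := W.mkQ_surjective u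
  refine ⟨y, ?_⟩
  rintro ⟨s, hs⟩ hW
  obtain ⟨t, rfl⟩ : ∃ t : U ⧸ W →ₗ[K] V, t ∘ₗ W.mkQ = s := ⟨W.liftQ s hW, W.liftQ_mkQ s hW⟩
  exact hu ⟨t, hs⟩

theorem exists_forall_sub_apply_mem_of_isLocalMap {W : Submodule K V}
    {F' : codomainQuotient S W →ₗ[K] V ⧸ W}
    (hF' : ∀ s : S, F' ⟨_, mkQ_comp_mem_codomainQuotient W s⟩ = W.mkQ (F s))
    (h : IsLocalMap F') : ∃ u : U, ∀ s : S, F s - (s : U →ₗ[K] V) u ∈ W := by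
  obtain ⟨u, hu⟩ := h
  refine ⟨u, fun s => ?_⟩
  rw [← Submodule.Quotient.mk_eq_zero, Submodule.Quotient.mk_sub, sub_eq_zero]
  exact (hF' s).symm.trans (hu ⟨_, mkQ_comp_mem_codomainQuotient W s⟩)

theorem not_ker_compRight_mkQ_le {v : V} (hv : v ∉ rankOneDirections S) :
    ¬ LinearMap.ker (LinearMap.compRight K (M := U) (K ∙ v).mkQ) ≤ S := by
  refine fun h => hv (mem_rankOneDirections.2 fun g => h ?_)
  ext u
  exact (Submodule.Quotient.mk_eq_zero _).2
    (Submodule.smul_mem _ _ (Submodule.mem_span_singleton_self v))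

theorem finrank_add_finrank_lt_codomainQuotient [FiniteDimensional K U] [FiniteDimensional K V]
    {v : V} (hv : v ∉ rankOneDirections S) :
    finrank K (U →ₗ[K] V ⧸ K ∙ v) + finrank K S <
      finrank K (U →ₗ[K] V) + finrank K (codomainQuotient S (K ∙ v)) := by
  refine finrank_add_finrank_lt_of_not_ker_le (fun t => ?_) (not_ker_compRight_mkQ_le hv)
  exact Module.projective_lifting_property _ t (K ∙ v).mkQ_surjective

variable [FiniteDimensional K U]

theorem QuasiRangeCompatible.exists_forall_apply_smulRight (hF : QuasiRangeCompatible D F) {w : V}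
    (hw : w ∈ rankOneDirections S) (hDw : ¬ D ≤ K ∙ w) :
    ∃ u : U, ∀ g : Dual K U, F ⟨_, mem_rankOneDirections.1 hw g⟩ = g u • w := by
  have hspan : ∀ g : Dual K U, F ⟨_, mem_rankOneDirections.1 hw g⟩ ∈ K ∙ w := by
    intro g
    have hrange : LinearMap.range (g.smulRight w) ≤ K ∙ w := by
      rintro _ ⟨u, rfl⟩
      exact Submodule.smul_mem _ _ (Submodule.mem_span_singleton_self w)
    exact hrange (hF ⟨_, mem_rankOneDirections.1 hw g⟩ fun h => hDw (h.trans hrange))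
  let R : Dual K U →ₗ[K] S :=
    (LinearMap.smulRightₗ.flip w).codRestrict S (mem_rankOneDirections.1 hw)
  rcases eq_or_ne w 0 with rfl | hw0
  · exact ⟨0, fun g => by simpa using hspan g⟩
  obtain ⟨f, hf⟩ := Module.Projective.exists_dual_eq_one K hw0
  obtain ⟨u, hu⟩ := (Module.evalEquiv K U).surjective (f ∘ₗ F ∘ₗ R)
  refine ⟨u, fun g => ?_⟩
  obtain ⟨c, hc⟩ := Submodule.mem_span_singleton.1 (hspan g)
  have hgu : g u = f (F ⟨_, mem_rankOneDirections.1 hw g⟩) := LinearMap.congr_fun hu g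
  rw [hgu, ← hc, map_smul, hf, smul_eq_mul, mul_one]

theorem QuasiRangeCompatible.apply_smulRight_eq (hF : QuasiRangeCompatible D F) {w w' : V}
    (hw : w ∈ rankOneDirections S) (hw' : w' ∈ rankOneDirections S)
    (hli : LinearIndependent K ![w, w']) (hDw : ¬ D ≤ K ∙ w) (hDadd : ¬ D ≤ K ∙ (w + w'))
    {u : U} (hu : ∀ g : Dual K U, F ⟨_, mem_rankOneDirections.1 hw' g⟩ = g u • w')
    (g : Dual K U) : F ⟨_, mem_rankOneDirections.1 hw g⟩ = g u • w := by
  obtain ⟨u₁, hu₁⟩ := hF.exists_forall_apply_smulRight hw hDw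
  obtain ⟨u₂, hu₂⟩ := hF.exists_forall_apply_smulRight (add_mem hw hw') hDadd
  have hsum : g u₂ • (w + w') = g u₁ • w + g u • w' := by
    rw [← hu₁ g, ← hu g, ← hu₂ g, ← map_add]
    exact congrArg F (Subtype.ext ((LinearMap.smulRightₗ g).map_add w w'))
  have hrel : (g u₂ - g u₁) • w + (g u₂ - g u) • w' = 0 := by
    linear_combination (norm := module) hsum
  obtain ⟨h₁, h₂⟩ := LinearIndependent.pair_iff.1 hli _ _ hrel
  rw [hu₁, ← sub_eq_zero.1 h₁, sub_eq_zero.1 h₂]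

theorem isLocalMap_of_forall_apply_smulRight {F : (⊤ : Submodule K (U →ₗ[K] V)) →ₗ[K] V}
    {E : Submodule K V} (hE : E ≠ ⊤) {u : U}
    (h : ∀ w ∉ E, ∀ g : Dual K U, F ⟨g.smulRight w, trivial⟩ = g u • w) : IsLocalMap F := by
  let G : (U →ₗ[K] V) →ₗ[K] V := F ∘ₗ Submodule.topEquiv.symm.toLinearMap
  have hrankOne : ∀ g : Dual K U, G ∘ₗ LinearMap.smulRightₗ g - g u • LinearMap.id = 0 :=
    fun g => eq_zero_of_forall_notMem_apply_eq_zero hE fun w hw => sub_eq_zero.2 (h w hw g)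
  have hG : G = LinearMap.applyₗ u := by
    refine LinearMap.ext_on span_range_smulRight_eq_top ?_
    rintro _ ⟨⟨g, w⟩, rfl⟩
    exact sub_eq_zero.1 (LinearMap.congr_fun (hrankOne g) w)
  exact ⟨u, fun s => LinearMap.congr_fun hG s⟩

theorem QuasiRangeCompatible.isLocalMap_of_top {F : (⊤ : Submodule K (U →ₗ[K] V)) →ₗ[K] V}
    (hF : QuasiRangeCompatible D F) (hD : D ≠ ⊥) (hV : 3 ≤ finrank K V) : IsLocalMap F := by
  obtain ⟨d, hdD, hd⟩ := Submodule.exists_mem_ne_zero_of_ne_bot hD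
  have hN : ∀ w : V, w ∈ rankOneDirections (⊤ : Submodule K (U →ₗ[K] V)) :=
    fun w => mem_rankOneDirections.2 fun _ => trivial
  obtain ⟨w', -, hw'⟩ := SetLike.exists_of_lt (span_pair_ne_top (K := K) hV d d).lt_top
  rw [Set.pair_eq_singleton] at hw'
  obtain ⟨u, hu⟩ := hF.exists_forall_apply_smulRight (hN w')
    (not_le_span_singleton_of_notMem hdD hd hw')
  refine isLocalMap_of_forall_apply_smulRight (span_pair_ne_top hV d w') (u := u) fun w hw => ?_
  have hdE : K ∙ d ≤ Submodule.span K {d, w'} := Submodule.span_mono (by simp)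
  have hw'E : w' ∈ Submodule.span K {d, w'} := Submodule.subset_span (by simp)
  have hw'0 : w' ≠ 0 := fun h => hw' (h ▸ zero_mem _)
  have hli : LinearIndependent K ![w, w'] := by
    rw [LinearIndependent.pair_symm_iff, LinearIndependent.pair_iff' hw'0]
    rintro c rfl
    exact hw (Submodule.smul_mem _ c hw'E)
  exact hF.apply_smulRight_eq (hN w) (hN w') hli
    (not_le_span_singleton_of_notMem hdD hd fun h => hw (hdE h))
    (not_le_span_singleton_of_notMem hdD hd fun h =>
      hw ((Submodule.add_mem_iff_left _ hw'E).1 (hdE h))) hu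

theorem eq_of_forall_sub_apply_mem_span_singleton [FiniteDimensional K V]
    (hS : finrank K (U →ₗ[K] V) + 3 ≤ finrank K S + finrank K V) {v w : V} {u u' : U}
    (hu : ∀ s : S, F s - (s : U →ₗ[K] V) u ∈ K ∙ v)
    (hu' : ∀ s : S, F s - (s : U →ₗ[K] V) u' ∈ K ∙ w) : u = u' := by
  by_contra hne
  have hmem : ∀ s ∈ S, s (u - u') ∈ Submodule.span K {v, w} := by
    intro s hs
    have hv : K ∙ v ≤ Submodule.span K {v, w} := Submodule.span_mono (by simp)
    have hw : K ∙ w ≤ Submodule.span K {v, w} := Submodule.span_mono (by simp)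
    simpa using sub_mem (hw (hu' ⟨s, hs⟩)) (hv (hu ⟨s, hs⟩))
  have hcodim := finrank_add_finrank_le_of_forall_apply_mem (sub_ne_zero.2 hne) hmem
  have hpair := finrank_span_pair_le_two (K := K) v w
  lia

theorem QuasiRangeCompatible.isLocalMap_of_codim [FiniteDimensional K V]
    (hF : QuasiRangeCompatible D F) (hD : D ≠ ⊥)
    (hS : finrank K (U →ₗ[K] V) + 3 ≤ finrank K S + finrank K V) : IsLocalMap F := by
  induction hn : finrank K V using Nat.strong_induction_on generalizing V with
  | h n ih =>
  subst hn
  have hV : 3 ≤ finrank K V := by have := S.finrank_le; lia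
  by_cases hT : S = ⊤
  · subst hT
    exact hF.isLocalMap_of_top hD hV
  obtain ⟨d, hdD, hd⟩ := Submodule.exists_mem_ne_zero_of_ne_bot hD
  have hlocalMod : ∀ v ∉ rankOneDirections S, v ∉ K ∙ d →
      ∃ u : U, ∀ s : S, F s - (s : U →ₗ[K] V) u ∈ K ∙ v := by
    intro v hvN hvd
    have hDv := not_le_span_singleton_of_notMem hdD hd hvd
    obtain ⟨F', hF', hF'mk⟩ := hF.exists_codomainQuotient hDv
    have hv0 : v ≠ 0 := fun h => hvN (h ▸ zero_mem _)
    have hdim := (K ∙ v).finrank_quotient_add_finrank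
    have hcodim := finrank_add_finrank_lt_codomainQuotient hvN
    rw [finrank_span_singleton hv0] at hdim
    refine exists_forall_sub_apply_mem_of_isLocalMap hF'mk
      (ih _ (by lia) hF' ?_ (by lia) rfl)
    rwa [Ne, ← le_bot_iff, Submodule.map_le_iff_le_comap, Submodule.comap_bot, Submodule.ker_mkQ]
  -- Locality modulo two distinct lines, with the same vector of `U`, gives locality.
  have hN := rankOneDirections_ne_top hT
  have hd1 : K ∙ d ≠ ⊤ := by simpa using span_pair_ne_top (K := K) hV d d
  obtain ⟨v, hvN, hvd⟩ := exists_notMem_and_notMem hN hd1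
  obtain ⟨w, hwN, hw⟩ := exists_notMem_and_notMem hN (span_pair_ne_top hV d v)
  have hwd : w ∉ K ∙ d := fun h => hw (Submodule.span_mono (by simp) h)
  have hwv : w ∉ K ∙ v := fun h => hw (Submodule.span_mono (by simp) h)
  obtain ⟨u, hu⟩ := hlocalMod v hvN hvd
  obtain ⟨u', hu'⟩ := hlocalMod w hwN hwd
  obtain rfl := eq_of_forall_sub_apply_mem_span_singleton hS hu hu'
  refine ⟨u, fun s => sub_eq_zero.1 ?_⟩
  by_contra hne
  exact hwv (Submodule.mem_span_singleton_trans (mem_span_singleton_symm hne (hu' s)) (hu s))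

end QuasiRangeCompatible

section PlaneEndomorphisms

variable {K V : Type*} [Field K] [AddCommGroup V] [Module K V] {P D : Submodule K V}
  {φ ψ : V →ₗ[K] V}

/-- `ψ` induces a rank-one idempotent endomorphism of `P` whose image and kernel differ from `D`.
Only the restriction of `ψ` to `P` matters. -/
structure IsTransverseProjection (ψ : V →ₗ[K] V) (P D : Submodule K V) : Prop where
  apply_mem : ∀ p ∈ P, ψ p ∈ P
  apply_apply : ∀ p ∈ P, ψ (ψ p) = ψ p
  finrank_map : finrank K (P.map ψ) = 1
  map_ne : P.map ψ ≠ D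
  inf_ker_ne : P ⊓ LinearMap.ker ψ ≠ D

theorem isTransverseProjection_of_span_pair {e k : V} (he : ψ e = e) (hk : ψ k = 0) (heD : e ∉ D)
    (hkD : k ∉ D) : IsTransverseProjection ψ (Submodule.span K {e, k}) D := by
  have hmap : (Submodule.span K {e, k}).map ψ = K ∙ e := by
    rw [Submodule.map_span, Set.image_pair, he, hk, Set.pair_comm, Submodule.span_insert_zero]
  have heP : e ∈ Submodule.span K {e, k} := Submodule.subset_span (by simp)
  have hkP : k ∈ Submodule.span K {e, k} := Submodule.subset_span (by simp)
  refine ⟨fun p hp => ?_, fun p hp => ?_, ?_, ?_, ?_⟩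
  · exact (Submodule.span_singleton_le_iff_mem _ _).2 heP (hmap ▸ Submodule.mem_map_of_mem hp)
  · obtain ⟨c, hc⟩ := Submodule.mem_span_singleton.1 (hmap ▸ Submodule.mem_map_of_mem hp)
    rw [← hc, map_smul, he]
  · rw [hmap, finrank_span_singleton (ne_of_mem_of_not_mem (zero_mem D) heD).symm]
  · exact fun h => heD (h ▸ hmap ▸ Submodule.mem_span_singleton_self e)
  · exact fun h => hkD (h ▸ ⟨hkP, hk⟩)

theorem exists_forall_apply_eq_smul (h : ∀ p ∈ P, φ p ∈ K ∙ p) :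
    ∃ c : K, ∀ p ∈ P, φ p = c • p := by
  have hP : ∀ p ∈ P, φ p ∈ P := fun p hp =>
    (Submodule.span_singleton_le_iff_mem _ _).2 hp (h p hp)
  obtain ⟨c, hc⟩ := LinearMap.exists_eq_smul_id_of_forall_notLinearIndependent
    (f := φ.restrict hP) fun p hli => by
      obtain ⟨c, hc⟩ := Submodule.mem_span_singleton.1 (h p p.2)
      exact (LinearIndependent.pair_iff' (hli.ne_zero 0)).1 hli c (Subtype.ext hc)
  exact ⟨c, fun p hp => congrArg Subtype.val (LinearMap.congr_fun hc ⟨p, hp⟩)⟩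

theorem eq_zero_or_eq_one_of_apply_add_smul_mem_span {e d : V}
    (hli : LinearIndependent K ![e, d]) {a c : K} (hac : a ≠ c) (he : φ e = a • e)
    (hed : φ (e + d) = c • (e + d)) {t : K} (ht : φ (e + t • d) ∈ K ∙ (e + t • d)) :
    t = 0 ∨ t = 1 := by
  obtain ⟨m, hm⟩ := Submodule.mem_span_singleton.1 ht
  have hd : φ d = c • (e + d) - a • e := by rw [← hed, map_add, he, add_sub_cancel_left]
  rw [map_add, map_smul, he, hd] at hm
  have hrel : (m - a - t * (c - a)) • e + (m * t - t * c) • d = 0 := by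
    linear_combination (norm := module) hm
  obtain ⟨hme, hmd⟩ := LinearIndependent.pair_iff.1 hli _ _ hrel
  have hprod : (t * (t - 1)) * (c - a) = 0 := by linear_combination hmd - t * hme
  have htt := (mul_eq_zero.1 hprod).resolve_right (sub_ne_zero.2 hac.symm)
  exact (mul_eq_zero.1 htt).imp_right sub_eq_zero.1

theorem apply_eq_smul_of_mem_span_pair {e k : V} {c : K} (he : φ e = c • e) (hk : φ k = c • k) :
    ∀ p ∈ Submodule.span K {e, k}, φ p = c • p := by
  intro p hp
  obtain ⟨a, b, rfl⟩ := Submodule.mem_span_pair.1 hp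
  rw [map_add, map_smul, map_smul, he, hk]
  module

theorem exists_span_pair_eq (hP : finrank K P = 2) (hD : finrank K D = 1) (hDP : D ≤ P) :
    ∃ e d : V, LinearIndependent K ![e, d] ∧ D = K ∙ d ∧ P = Submodule.span K {e, e + d} := by
  have hD0 : D ≠ ⊥ := by
    rintro rfl
    simp at hD
  obtain ⟨d, hdD, hd⟩ := Submodule.exists_mem_ne_zero_of_ne_bot hD0
  have hDd : D = K ∙ d := eq_span_singleton_of_mem_of_finrank_eq_one hD hdD hd
  have hDneP : D ≠ P := fun h => by
    rw [h] at hD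
    lia
  obtain ⟨e, heP, heD⟩ := SetLike.exists_of_lt (hDP.lt_of_ne hDneP)
  have hli : LinearIndependent K ![e, d] := by
    rw [LinearIndependent.pair_symm_iff, LinearIndependent.pair_iff' hd]
    rintro c rfl
    exact heD (D.smul_mem c hdD)
  have : FiniteDimensional K P := FiniteDimensional.of_finrank_pos (by lia)
  have hspan : Submodule.span K {e, e + d} = P := by
    refine Submodule.eq_of_le_of_finrank_le ?_ ?_
    · exact Submodule.span_le.2 (Set.pair_subset heP (add_mem heP (hDP hdD)))
    · have hli' : LinearIndependent K ![e, e + d] := by simpa using hli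
      rw [hP, ← Matrix.range_cons_cons_empty, finrank_span_eq_card hli', Fintype.card_fin]
  exact ⟨e, d, hli, hDd, hspan.symm⟩

theorem natCard_eq_two_and_exists_isTransverseProjection (hP : finrank K P = 2)
    (hD : finrank K D = 1) (hDP : D ≤ P) (hφ : ∀ p ∈ P, ¬ D ≤ K ∙ p → φ p ∈ K ∙ p)
    (hscalar : ¬ ∃ c : K, ∀ p ∈ P, φ p = c • p) :
    Nat.card K = 2 ∧ ∃ c : K, IsTransverseProjection (φ - c • LinearMap.id) P D := by
  obtain ⟨e, d, hli, rfl, rfl⟩ := exists_span_pair_eq hP hD hDP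
  have hd : d ≠ 0 := hli.ne_zero 1
  have hnotMem : ∀ t : K, e + t • d ∉ K ∙ d := by
    intro t ht
    obtain ⟨b, hb⟩ := Submodule.mem_span_singleton.1 ht
    exact one_ne_zero (LinearIndependent.pair_iff.1 hli 1 (t - b) (by rw [sub_smul, hb]; module)).1
  have heigen : ∀ t : K, φ (e + t • d) ∈ K ∙ (e + t • d) := fun t =>
    hφ _ (Submodule.mem_span_pair.2 ⟨1 - t, t, by module⟩)
      (not_le_span_singleton_of_notMem (Submodule.mem_span_singleton_self d) hd (hnotMem t))
  obtain ⟨a, ha⟩ := Submodule.mem_span_singleton.1 (heigen 0)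
  obtain ⟨c, hc⟩ := Submodule.mem_span_singleton.1 (heigen 1)
  have he := hnotMem 0
  have hed := hnotMem 1
  rw [zero_smul, add_zero] at ha he
  rw [one_smul] at hc hed
  have hac : a ≠ c := by
    rintro rfl
    exact hscalar ⟨a, apply_eq_smul_of_mem_span_pair ha.symm hc.symm⟩
  have hK : ∀ t : K, t = 0 ∨ t = 1 := fun t =>
    eq_zero_or_eq_one_of_apply_add_smul_mem_span hli hac ha.symm hc.symm (heigen t)
  have hac1 : a - c = 1 := (hK _).resolve_left (sub_ne_zero.2 hac)
  refine ⟨natCard_eq_two_iff_forall_eq_zero_or_eq_one.2 hK, c,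
    isTransverseProjection_of_span_pair ?_ ?_ he hed⟩
  · simp [← ha, ← sub_smul, hac1]
  · simp [← hc]

end PlaneEndomorphisms

section Evaluation

variable {K U V : Type*} [Field K] [AddCommGroup U] [Module K U] [AddCommGroup V] [Module K V]
  {S : Submodule K (U →ₗ[K] V)} {F : S →ₗ[K] V} {D : Submodule K V} {x y : U}

theorem range_lcomp_mkQ_span_singleton (x : U) :
    LinearMap.range (LinearMap.lcomp K V (K ∙ x).mkQ) = LinearMap.ker (LinearMap.applyₗ x) := by
  ext s
  refine ⟨?_, fun hs => ?_⟩
  · rintro ⟨t, rfl⟩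
    have hxq : (K ∙ x).mkQ x = 0 :=
      (Submodule.Quotient.mk_eq_zero _).2 (Submodule.mem_span_singleton_self x)
    exact (congrArg t hxq).trans (map_zero t)
  · have hxs : K ∙ x ≤ LinearMap.ker s := (Submodule.span_singleton_le_iff_mem _ _).2 hs
    exact ⟨(K ∙ x).liftQ s hxs, (K ∙ x).liftQ_mkQ s hxs⟩

theorem exists_forall_apply_eq_zero_and_apply_ne_zero [FiniteDimensional K U]
    {T : Submodule K (U →ₗ[K] V)} {f : Dual K V} {s₀ : U →ₗ[K] V}
    (h : ∀ t ∈ T, f ∘ₗ t ≠ f ∘ₗ s₀) : ∃ u : U, (∀ t ∈ T, f (t u) = 0) ∧ f (s₀ u) ≠ 0 := by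
  have hs₀ : f ∘ₗ s₀ ∉ T.map (LinearMap.compRight K f) := by
    rintro ⟨t, ht, hts⟩
    exact h t ht hts
  obtain ⟨E, hE, hTE⟩ := Submodule.exists_le_ker_of_notMem hs₀
  obtain ⟨u, rfl⟩ := (Module.evalEquiv K U).surjective E
  exact ⟨u, fun t ht => hTE (Submodule.mem_map_of_mem ht), hE⟩

theorem not_exists_forall_apply_eq_smul_of_not_isLocalMap (hF : ¬ IsLocalMap F) {φ : V →ₗ[K] V}
    (hφ : ∀ s : S, F s = (s : U →ₗ[K] V) y + φ ((s : U →ₗ[K] V) x)) :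
    ¬ ∃ c : K, ∀ p ∈ S.map (LinearMap.applyₗ x), φ p = c • p := by
  rintro ⟨c, hc⟩
  refine hF ⟨y + c • x, fun s => ?_⟩
  have hcs : φ ((s : U →ₗ[K] V) x) = c • (s : U →ₗ[K] V) x := hc _ ⟨s, s.2, rfl⟩
  rw [hφ s, hcs, map_add, map_smul]

variable [FiniteDimensional K V]

theorem finrank_le_finrank_span_dual_add_two {p d b : V} (hd : d ∉ K ∙ p) (hb : b ∉ K ∙ p) :
    finrank K V ≤
      finrank K (Submodule.span K {f : Dual K V | f p = 0 ∧ f d ≠ 0 ∧ f b ≠ 0}) + 2 := by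
  set A := {f : Dual K V | f p = 0 ∧ f d ≠ 0 ∧ f b ≠ 0}
  have hcoann : (Submodule.span K A).dualCoannihilator ≤ Submodule.span K {p, d - b} := by
    intro v hv
    have hAv : ∀ f ∈ A, f v = 0 := fun f hf =>
      (Submodule.mem_dualCoannihilator v).1 hv f (Submodule.subset_span hf)
    by_contra hvspan
    obtain ⟨f, hfv, hf⟩ := Submodule.exists_le_ker_of_notMem hvspan
    have hfp : f p = 0 := hf (Submodule.subset_span (by simp))
    have hfdb : f d = f b := by
      have h : f (d - b) = 0 := hf (Submodule.subset_span (by simp))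
      rwa [map_sub, sub_eq_zero] at h
    by_cases hfd : f d = 0
    · obtain ⟨g, hg, hgd, hgb⟩ := exists_dual_le_ker_and_apply_ne_zero hd hb
      have hgp : g p = 0 := hg (Submodule.mem_span_singleton_self p)
      have hgv := hAv g ⟨hgp, hgd, hgb⟩
      refine hfv ?_
      simpa [hgv] using hAv (f + g) ⟨by simp [hfp, hgp], by simpa [hfd], by simpa [← hfdb, hfd]⟩
    · exact hfv (hAv f ⟨hfp, hfd, hfdb ▸ hfd⟩)
  have hle := (Submodule.finrank_mono hcoann).trans (finrank_span_pair_le_two p (d - b))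
  have hdim := Subspace.finrank_add_finrank_dualCoannihilator_eq (Submodule.span K A)
  lia

variable [FiniteDimensional K U]

theorem finrank_map_applyₗ_add_finrank_domainQuotient (S : Submodule K (U →ₗ[K] V)) (x : U) :
    finrank K (S.map (LinearMap.applyₗ x)) + finrank K (domainQuotient S (K ∙ x)) =
      finrank K S := by
  have hinj := LinearMap.lcomp_injective_of_surjective (S := K) (N := V) _ (K ∙ x).mkQ_surjective
  rw [← finrank_map_add_finrank_inf_ker (LinearMap.applyₗ x) S, ← range_lcomp_mkQ_span_singleton,
    inf_comm, ← Submodule.map_comap_eq]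
  exact congrArg _ (Submodule.equivMapOfInjective _ hinj _).finrank_eq

theorem finrank_linearMap_quotient_span_singleton_add (hx : x ≠ 0) :
    finrank K (U ⧸ K ∙ x →ₗ[K] V) + finrank K V = finrank K (U →ₗ[K] V) := by
  have hU := (K ∙ x).finrank_quotient_add_finrank
  rw [finrank_span_singleton hx] at hU
  rw [finrank_linearMap, finrank_linearMap, ← hU, add_one_mul]

theorem QuasiRangeCompatible.exists_forall_eq_apply_add (hF : QuasiRangeCompatible D F)
    (hD : D ≠ ⊥)
    (hS : finrank K (U ⧸ K ∙ x →ₗ[K] V) + 3 ≤ finrank K (domainQuotient S (K ∙ x)) + finrank K V) :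
    ∃ (y : U) (φ : V →ₗ[K] V), ∀ s : S, F s = (s : U →ₗ[K] V) y + φ ((s : U →ₗ[K] V) x) := by
  obtain ⟨y, hy⟩ := exists_forall_eq_apply_of_isLocalMap_domainQuotientMap
    ((hF.domainQuotientMap (K ∙ x)).isLocalMap_of_codim hD hS)
  have hker : LinearMap.ker ((LinearMap.applyₗ x).domRestrict S) ≤
      LinearMap.ker (F - (LinearMap.applyₗ y).domRestrict S) := fun s hs =>
    sub_eq_zero.2 (hy s ((Submodule.span_singleton_le_iff_mem _ _).2 hs))
  obtain ⟨φ, hφ⟩ := exists_comp_eq_of_ker_le_ker _ _ hker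
  exact ⟨y, φ, fun s => eq_add_of_sub_eq' (LinearMap.congr_fun hφ s).symm⟩

theorem exists_apply_eq_and_notMem_range
    (hS : finrank K (U ⧸ K ∙ x →ₗ[K] V) + 3 ≤ finrank K (domainQuotient S (K ∙ x)) + finrank K V)
    {s₀ : U →ₗ[K] V} (hs₀ : s₀ ∈ S) {d b : V} (hd : d ∉ K ∙ s₀ x) (hb : b ∉ K ∙ s₀ x) :
    ∃ s ∈ S, s x = s₀ x ∧ d ∉ LinearMap.range s ∧ b ∉ LinearMap.range s := by
  by_contra! hcon
  have hne : ∀ f : Dual K V, f d ≠ 0 → f b ≠ 0 → ∀ s ∈ S, s x = s₀ x → f ∘ₗ s ≠ 0 := by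
    intro f hfd hfb s hs hsx hfs
    have hrange : LinearMap.range s ≤ LinearMap.ker f := LinearMap.range_le_ker_iff.2 hfs
    exact hfb (hrange (hcon s hs hsx fun h => hfd (hrange h)))
  have hkill : ∀ f ∈ {f : Dual K V | f (s₀ x) = 0 ∧ f d ≠ 0 ∧ f b ≠ 0},
      ∃ u : U ⧸ K ∙ x, u ≠ 0 ∧ ∀ t ∈ domainQuotient S (K ∙ x), f (t u) = 0 := by
    rintro f ⟨hfx, hfd, hfb⟩
    have hT : ∀ t ∈ S ⊓ LinearMap.ker (LinearMap.applyₗ x), f ∘ₗ t ≠ f ∘ₗ s₀ := by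
      rintro t ⟨htS, htx⟩ hft
      have htx : t x = 0 := htx
      refine hne f hfd hfb (s₀ - t) (sub_mem hs₀ htS) (by simp [htx]) ?_
      rw [LinearMap.comp_sub, hft, sub_self]
    obtain ⟨u, hu, hus₀⟩ := exists_forall_apply_eq_zero_and_apply_ne_zero hT
    refine ⟨(K ∙ x).mkQ u, fun hux => ?_, fun t ht =>
      hu _ ⟨ht, (range_lcomp_mkQ_span_singleton x).le (LinearMap.mem_range_self _ t)⟩⟩
    obtain ⟨c, rfl⟩ := Submodule.mem_span_singleton.1 ((Submodule.Quotient.mk_eq_zero _).1 hux)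
    exact hus₀ (by simp [hfx])
  have hcodim := finrank_span_add_finrank_le _ _ hkill
  have hspan := finrank_le_finrank_span_dual_add_two hd hb
  lia

theorem QuasiRangeCompatible.apply_mem_span_singleton (hF : QuasiRangeCompatible D F)
    (hS : finrank K (U ⧸ K ∙ x →ₗ[K] V) + 3 ≤ finrank K (domainQuotient S (K ∙ x)) + finrank K V)
    {φ : V →ₗ[K] V} (hφ : ∀ s : S, F s = (s : U →ₗ[K] V) y + φ ((s : U →ₗ[K] V) x)) :
    ∀ p ∈ S.map (LinearMap.applyₗ x), ¬ D ≤ K ∙ p → φ p ∈ K ∙ p := by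
  rintro _ ⟨s₀, hs₀, rfl⟩ hDp
  obtain ⟨d, hdD, hd⟩ := SetLike.not_le_iff_exists.1 hDp
  by_contra hb
  obtain ⟨s, hsS, hsx, hds, hbs⟩ := exists_apply_eq_and_notMem_range hS hs₀ hd hb
  have hFs := hF ⟨s, hsS⟩ fun h => hds (h hdD)
  rw [hφ ⟨s, hsS⟩] at hFs
  have hφs := (Submodule.add_mem_iff_right _ (LinearMap.mem_range_self s y)).1 hFs
  rw [hsx] at hφs
  exact hbs hφs

end Evaluation

theorem quasi_range_compatible_hom_special_type_two_card_two_general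
    {K U V : Type*} [Field K] [AddCommGroup U] [Module K U] [FiniteDimensional K U]
    [AddCommGroup V] [Module K V] [FiniteDimensional K V]
    {S : Submodule K (U →ₗ[K] V)} (h1 : finrank K (U →ₗ[K] V) + 5 ≤ finrank K S + 2 * finrank K V)
    {x : U} (hx : finrank K (S.map (LinearMap.applyₗ x)) = 2)
    {F : S →ₗ[K] V} (hnl : ¬ IsLocalMap F)
    {D : Submodule K V} (hD : finrank K D = 1) (hq : QuasiRangeCompatible D F) :
    Nat.card K = 2 ∧ D ≤ S.map (LinearMap.applyₗ x) ∧
      ∃ (x' : U) (φ : V →ₗ[K] V), IsTransverseProjection φ (S.map (LinearMap.applyₗ x)) D ∧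
        ∀ s : S, F s = (s : U →ₗ[K] V) x' + φ ((s : U →ₗ[K] V) x) := by
  have hx0 : x ≠ 0 := by
    rintro rfl
    rw [map_zero, Submodule.map_zero, finrank_bot] at hx
    lia
  have hS := finrank_map_applyₗ_add_finrank_domainQuotient S x
  have hUV := finrank_linearMap_quotient_span_singleton_add (K := K) (V := V) hx0
  have hcodim : finrank K (U ⧸ K ∙ x →ₗ[K] V) + 3 ≤
      finrank K (domainQuotient S (K ∙ x)) + finrank K V := by lia
  have hD0 : D ≠ ⊥ := Submodule.one_le_finrank_iff.1 hD.ge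
  obtain ⟨y, φ, hφ⟩ := hq.exists_forall_eq_apply_add hD0 hcodim
  have hscalar := not_exists_forall_apply_eq_smul_of_not_isLocalMap hnl hφ
  have heigen := hq.apply_mem_span_singleton hcodim hφ
  have hDSx : D ≤ S.map (LinearMap.applyₗ x) := by
    by_contra hDSx
    refine hscalar (exists_forall_apply_eq_smul fun p hp => heigen p hp fun hDp => hDSx ?_)
    exact hDp.trans ((Submodule.span_singleton_le_iff_mem _ _).2 hp)
  obtain ⟨hK, c, hc⟩ := natCard_eq_two_and_exists_isTransverseProjection hx hD hDSx heigen hscalar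
  refine ⟨hK, hDSx, y + c • x, _, hc, fun s => ?_⟩
  simp [hφ s]

/-- Let `K` be the field with exactly 2 elements, `S` a linear subspace
of `L(U,V)` with `codim S ≤ 2 dim V − 5`, and `x ∈ U` with `dim Sx = 2` (where
`Sx = Submodule.map (LinearMap.applyₗ x) S`). Let `F : S → V` be a non-local additive
homomorphism that is quasi-range-compatible with respect to a 1-dimensional subspace `D`.
Then (a) `D ⊆ Sx`, and (b) `F` is the sum of a local map and `s ↦ φ (s x)` where `φ` is a
`K`-linear idempotent endomorphism of `Sx` (encoded as a linear map `V →ₗ[K] V`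
preserving `Sx` and idempotent on it) whose image has dimension 1 and whose kernel and
image (within `Sx`) both differ from `D`. -/
theorem quasi_range_compatible_hom_special_type_two_card_two
    (K U V : Type*) [Field K] (hK : Nat.card K = 2)
    [AddCommGroup U] [Module K U] [FiniteDimensional K U]
    [AddCommGroup V] [Module K V] [FiniteDimensional K V]
    (S : Submodule K (U →ₗ[K] V))
    (h1 : Module.finrank K (U →ₗ[K] V) + 5 ≤
      Module.finrank K S + 2 * Module.finrank K V)
    (x : U)
    (hx : Module.finrank K (Submodule.map (LinearMap.applyₗ x) S) = 2)
    (F : ↥S →+ V)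
    (hnl : ¬ ∃ y : U, ∀ s : ↥S, F s = (s : U →ₗ[K] V) y)
    (D : Submodule K V) (hD : Module.finrank K D = 1)
    (hq : ∀ s : ↥S, ¬ D ≤ LinearMap.range (s : U →ₗ[K] V) →
      F s ∈ LinearMap.range (s : U →ₗ[K] V)) :
    D ≤ Submodule.map (LinearMap.applyₗ x) S ∧
    ∃ (x' : U) (φ : V →ₗ[K] V),
      (∀ y ∈ Submodule.map (LinearMap.applyₗ x) S,
        φ y ∈ Submodule.map (LinearMap.applyₗ x) S) ∧
      (∀ y ∈ Submodule.map (LinearMap.applyₗ x) S, φ (φ y) = φ y) ∧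
      Module.finrank K (Submodule.map φ (Submodule.map (LinearMap.applyₗ x) S)) = 1 ∧
      Submodule.map φ (Submodule.map (LinearMap.applyₗ x) S) ≠ D ∧
      Submodule.map (LinearMap.applyₗ x) S ⊓ LinearMap.ker φ ≠ D ∧
      ∀ s : ↥S, F s = (s : U →ₗ[K] V) x' + φ ((s : U →ₗ[K] V) x) := by
  obtain ⟨L, hL⟩ := exists_linearMap_eq_of_natCard_eq_two hK F
  simp only [← hL] at hnl hq ⊢
  obtain ⟨-, hDSx, x', φ, hφ, hLφ⟩ :=
    quasi_range_compatible_hom_special_type_two_card_two_general h1 hx hnl hD hq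
  exact ⟨hDSx, x', φ, hφ.apply_mem, hφ.apply_apply, hφ.finrank_map, hφ.map_ne, hφ.inf_ker_ne, hLφ⟩
end
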